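/- Assume the kernel K is given by K^Ft(t) = (1 − t^r)^s·1(|t| ≤ 1) with r ≥ 2 an even integer, s ≥ 1 an integer, and r > β + 1/2. Then for all C_1, C_2 > 0 there exists B > 0, depending only on C_1, C_2, r, s, α and β, such that for all 0 ≤ h ≤ 1 and n ≥ 1: sup over F_δ ∈ ℱ_3(α,C_1), F_W ∈ 𝒢_3(β,C_2) and x ∈ ℝ of E{F̂_W(x|h) − F_W(x)}^2 is at most B{h^{2β} + n^{-1}(1 + h^{-(2α−1)}ℓ_h)}. -/

import Mathlib

/-!
The estimator is a sample mean of `g (X j)` with `g y = L₁(x - y | h)`, so its mean squared error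
is at most `n⁻¹ E g(X)² + (E g(X) - F_W(x))²` (`lintegral_sq_mean_sub_le`).

*The class `ℱ₃`.* A law with a density bounded by `C` and a positive characteristic function `f`
has `∫ f ≤ 2πC`: testing `f` against `exp (-ε|t|)` gives the Cauchy smoothing of the density at `0`
(`integral_charFn_le`). With the lower bound `C f(t) ≥ (1 + |t|)^(-α)` this forces `α > 1`
(`one_lt_of_memF3`), so that `ℓ_h = 1` whenever `ℱ₃(α, C)` is nonempty. For `h = 0` the negative
exponent `-(2α-1)` makes the right-hand side infinite, so only `h > 0` has content.

*Variance.* The integral defining `L₁` is split at `|t| = 1`. For `|t| ≤ 1` the weight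
`K^Ft(ht)/f(t)` is within `O(|t|)` of `exp (-|t|)`, because `E|δ| ≤ C`; the sine integral of
`exp (-|t|)/t` is an arctangent, so this part is bounded (`abs_lowFreq_le`). For `|t| > 1` put
`G(t) = K^Ft(ht)/(t f(t))`. Up to a term that only increases it, the second moment of
`∫ sin(t(x-X)) G(t) dt` is `∬ G(t) G(u) E cos((t-u)(x-X)) dt du`, where the expectation is at most
`f(t-u)` in absolute value because the characteristic function of `X` is that of `W` times `f`.
Schur's test bounds it by `‖G‖₂² ∫ f` (`integral_sq_sineTransform_le`), and
`‖G‖₂² = O(h^(-(2α-1)))` since `|G(t)| = O(h^(-(α-1)))` on `|t| ≤ 1/h` (`L1fun_second_moment`).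

*Bias.* Since `E sin(t(x-X)) = f(t) E sin(t(x-W))`, the factor `f` cancels and
`E g(X) = 1/2 + (2π)⁻¹ ∫ (E sin(t(x-W))/t) K^Ft(ht) dt` (`integral_L1fun_obsLaw`). For `β > 0` the
law of `W` has no atoms, and the Gil-Pelaez formula `cdfF_eq_gilPelaez` is the same expression
with `K^Ft` replaced by `1`; the difference is at most a constant times
`∫ |t|^(-1-β) (1 - K^Ft(ht)) dt`, a multiple of `h^β` by scaling, finite because `β < r`. For
`β = 0` both terms are bounded.
-/

open MeasureTheory Filter Topology
open scoped ENNReal ProbabilityTheory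

noncomputable section

/-- Characteristic function of a measure on `ℝ`. -/
def charFn (μ : Measure ℝ) (t : ℝ) : ℂ :=
  ∫ x, Complex.exp (Complex.I * (t * x)) ∂μ

/-- `μ` is a probability measure whose characteristic function is the real-valued,
everywhere equal to `f`. -/
def realCharFn (μ : Measure ℝ) (f : ℝ → ℝ) : Prop :=
  IsProbabilityMeasure μ ∧ ∀ t, charFn μ t = (f t : ℂ)

/-- Cumulative distribution function of a measure on `ℝ`. -/
def cdfF (μ : Measure ℝ) (x : ℝ) : ℝ :=
  (μ (Set.Iic x)).toReal

/-- Law of the observed sample `X_1, …, X_n`, where `X_j = W_j + δ_j`, the `W_j`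
are i.i.d. with law `μW` and the `δ_j` are i.i.d. with law `μδ`, independent of
the `W_j`'s. -/
def sampleLaw (μW μδ : Measure ℝ) (n : ℕ) : Measure (Fin n → ℝ) :=
  Measure.pi fun _ => (μW.prod μδ).map fun p => p.1 + p.2

/-- `E |x| ^ p ≤ C` for the measure `μ`. -/
def absMomBdd (μ : Measure ℝ) (p C : ℝ) : Prop :=
  ∫⁻ x, ENNReal.ofReal (|x| ^ p) ∂μ ≤ ENNReal.ofReal C

/-- `μ` has a (Lebesgue) density bounded by `C`. -/
def hasDensityBdd (μ : Measure ℝ) (C : ℝ) : Prop :=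
  ∃ f : ℝ → ℝ, Measurable f ∧ (∀ x, 0 ≤ f x) ∧ (∀ x, f x ≤ C) ∧
    μ = volume.withDensity fun x => ENNReal.ofReal (f x)

/-- Fourier transform of the polynomial kernel: `K^Ft(t) = (1 - t^r)^s 1(|t| ≤ 1)`. -/
def polyKFt (r s : ℕ) (t : ℝ) : ℝ :=
  if |t| ≤ 1 then (1 - t ^ r) ^ s else 0

/-- The function `L₁(u|h) = 1/2 + (2π)⁻¹ ∫ (sin(tu)/t) K^Ft(ht)/f_δ^Ft(t) dt`,
where `fδ` denotes the (real-valued) characteristic function of the error and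
`KFt` the Fourier transform of the kernel. -/
def L1fun (fδ KFt : ℝ → ℝ) (h u : ℝ) : ℝ :=
  1 / 2 + (2 * Real.pi)⁻¹ * ∫ t : ℝ, Real.sin (t * u) / t * (KFt (h * t) / fδ t)

/-- The function `L₁(u|0) = 1/2 + (2π)⁻¹ ∫ (sin(tu)/t) f_δ^Ft(t)⁻¹ dt`. -/
def L1zero (fδ : ℝ → ℝ) (u : ℝ) : ℝ :=
  1 / 2 + (2 * Real.pi)⁻¹ * ∫ t : ℝ, Real.sin (t * u) / (t * fδ t)

/-- The deconvolution distribution estimator `F̂_W(x|h)`. -/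
def FhatD (fδ KFt : ℝ → ℝ) (h : ℝ) {n : ℕ} (X : Fin n → ℝ) (x : ℝ) : ℝ :=
  (n : ℝ)⁻¹ * ∑ j, L1fun fδ KFt h (x - X j)

/-- The deconvolution distribution estimator `F̂_W(x|0)` at bandwidth `0`. -/
def Fhat0 (fδ : ℝ → ℝ) {n : ℕ} (X : Fin n → ℝ) (x : ℝ) : ℝ :=
  (n : ℝ)⁻¹ * ∑ j, L1zero fδ (x - X j)

/-- Mean squared error `E (T(X₁,…,Xₙ) - θ)²` of an estimator `T` of `θ`, the data
being an i.i.d. sample from the convolution of `μW` and `μδ`. -/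
def riskSq (μW μδ : Measure ℝ) (n : ℕ) (T : (Fin n → ℝ) → ℝ) (θ : ℝ) : ℝ≥0∞ :=
  ∫⁻ X, ENNReal.ofReal ((T X - θ) ^ 2) ∂sampleLaw μW μδ n

/-- The class `ℱ₁(C)` of error distributions. -/
def memF1 (C : ℝ) (μ : Measure ℝ) (f : ℝ → ℝ) : Prop :=
  realCharFn μ f ∧ (∀ t, 0 < f t) ∧
    ∫⁻ t in Set.Ioi (0 : ℝ), ENNReal.ofReal (t⁻¹ ^ 2 * ((f t)⁻¹ - 1) ^ 2) ≤ ENNReal.ofReal C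

/-- The class `ℱ₂(C)`: members of `ℱ₁(C)` with `E|δ| ≤ C`. -/
def memF2 (C : ℝ) (μ : Measure ℝ) (f : ℝ → ℝ) : Prop :=
  memF1 C μ f ∧ absMomBdd μ 1 C

/-- The class `ℱ₃(α, C)` of error distributions. -/
def memF3 (α C : ℝ) (μ : Measure ℝ) (f : ℝ → ℝ) : Prop :=
  realCharFn μ f ∧ (∀ t, 0 < f t) ∧ (∀ t, (1 + |t|) ^ (-α) ≤ C * f t) ∧
    hasDensityBdd μ C ∧ absMomBdd μ 1 C

/-- The class `ℱ₄(C, q)` of error distributions (for `2k < q < 2k+2`). -/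
def memF4 (C q : ℝ) (k : ℕ) (μ : Measure ℝ) (f : ℝ → ℝ) : Prop :=
  realCharFn μ f ∧ (∀ t, 0 < f t) ∧ absMomBdd μ (4 * (k + 1)) C ∧
    (∫⁻ t in Set.Ioc (0 : ℝ) 1, ENNReal.ofReal (t ^ (-(2 * (q + 1))) *
        (f t - ∑ j ∈ Finset.range (k + 1),
          (-1 : ℝ) ^ j * t ^ (2 * j) / (2 * j).factorial * ∫ x, x ^ (2 * j) ∂μ) ^ 2)) +
      (∫⁻ t in Set.Ioi (1 : ℝ), ENNReal.ofReal (t ^ (-(2 * (q + 1))) * ((f t)⁻¹) ^ 2)) ≤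
      ENNReal.ofReal C

/-- The class `ℱ₅(α, C)`: members of `ℱ₃(α, C)` with `E(δ^{4(k+1)}) ≤ C`. -/
def memF5 (α C : ℝ) (k : ℕ) (μ : Measure ℝ) (f : ℝ → ℝ) : Prop :=
  memF3 α C μ f ∧ absMomBdd μ (4 * (k + 1)) C

/-- The class `ℱ₆(α, C)`: members of `ℱ₃(α, C)` whose characteristic function has its
first two derivatives bounded analogously. -/
def memF6 (α C : ℝ) (μ : Measure ℝ) (f : ℝ → ℝ) : Prop :=
  memF3 α C μ f ∧ ∀ j ≤ 2, ∀ t, |iteratedDeriv j f t| ≤ C * (1 + |t|) ^ (-α - j)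

/-- The class `𝒢₁(C)`: distributions with a density bounded by `C`. -/
def memG1 (C : ℝ) (μ : Measure ℝ) : Prop :=
  IsProbabilityMeasure μ ∧ hasDensityBdd μ C

/-- The class `𝒢₂(C)`: distributions with `E|W| ≤ C`. -/
def memG2 (C : ℝ) (μ : Measure ℝ) : Prop :=
  IsProbabilityMeasure μ ∧ absMomBdd μ 1 C

/-- The class `𝒢₃(β, C)` of target distributions. -/
def memG3 (β C : ℝ) (μ : Measure ℝ) : Prop :=
  IsProbabilityMeasure μ ∧ (∀ t, ‖charFn μ t‖ ≤ C * (1 + |t|) ^ (-β)) ∧ absMomBdd μ 1 C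

/-- `k_β`, the least integer strictly exceeding `β ≥ 0`. -/
def kbeta (β : ℝ) : ℕ := ⌊β⌋₊ + 1

/-- The class `𝒢₄(β, C)` of target distributions. -/
def memG4 (β C : ℝ) (μ : Measure ℝ) : Prop :=
  memG3 β C μ ∧ ∀ x₀ > (0 : ℝ), ∀ k : ℕ, β < k → ∀ u > (0 : ℝ), ∀ x : ℝ, x₀ < |x| →
    (1 + u) ^ (β - k) *
        ‖∫ t in (0 : ℝ)..u, Complex.exp (Complex.I * (t * x)) * (t : ℂ) ^ k * charFn μ t‖ ≤
      C * k / ((kbeta β - β) * x₀)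

/-- The class `𝒢₅(C, k)` of target distributions. -/
def memG5 (C : ℝ) (k : ℕ) (μ : Measure ℝ) : Prop :=
  IsProbabilityMeasure μ ∧ hasDensityBdd μ C ∧ absMomBdd μ (4 * (k + 1)) C

/-- The class `𝒢₆(β, C)` of target distributions. -/
def memG6 (β C : ℝ) (k : ℕ) (μ : Measure ℝ) : Prop :=
  IsProbabilityMeasure μ ∧ absMomBdd μ (4 * (k + 1)) C ∧
    ∀ j ≤ 2 * k + 2, ∀ t, ‖iteratedDeriv j (charFn μ) t‖ ≤ C * (1 + |t|) ^ (-β - j)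

/-- The logarithmic factor `ℓ_h`. -/
def ellh (α h : ℝ) : ℝ := if α = 1 / 2 then 1 + |Real.log h| else 1

/-- The logarithmic factor `ℓ = ℓ(n)`. -/
def ellN (α : ℝ) (n : ℕ) : ℝ := if α = 1 / 2 then Real.log n else 1

/-- The deconvolution density estimator `f̂_W(u|h)`. -/
def fhatDen (fδ KFt : ℝ → ℝ) (h : ℝ) {n : ℕ} (X : Fin n → ℝ) (u : ℝ) : ℝ :=
  (n : ℝ)⁻¹ * ∑ j, (2 * Real.pi)⁻¹ * ∫ t : ℝ, Real.cos (t * (u - X j)) * (KFt (h * t) / fδ t)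

/-- The absolute-moment estimator `ν̂_q(h) = ∫ |u|^q dF̂_W(u|h)`. -/
def nuHat (fδ KFt : ℝ → ℝ) (h q : ℝ) {n : ℕ} (X : Fin n → ℝ) : ℝ :=
  ∫ u : ℝ, |u| ^ q * fhatDen fδ KFt h X u

/-- The absolute moment `ν_q = E|W|^q`. -/
def nuq (μ : Measure ℝ) (q : ℝ) : ℝ := ∫ x, |x| ^ q ∂μ

/-- The `u`-th quantile `ξ_u = F⁻¹(u)`. -/
def quantileF (μ : Measure ℝ) (u : ℝ) : ℝ := sInf {y | u ≤ cdfF μ y}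

/-- The quantile estimator `ξ̂_u(h) = sup{y : F̂_W(y|h) ≤ u}`. -/
def xiHatD (fδ KFt : ℝ → ℝ) (h : ℝ) {n : ℕ} (X : Fin n → ℝ) (u : ℝ) : ℝ :=
  sSup {y | FhatD fδ KFt h X y ≤ u}

/-- The class `𝒢_u^*(C, g)` of target distributions, regular near the `u`-th quantile. -/
def memGstar (u : ℝ) (g : ℝ → ℝ) (C : ℝ) (μ : Measure ℝ) : Prop :=
  ∃ fW : ℝ → ℝ, Measurable fW ∧ (∀ x, 0 ≤ fW x) ∧
    μ = volume.withDensity (fun x => ENNReal.ofReal (fW x)) ∧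
    (∀ x ∈ Set.Icc (quantileF μ u - C⁻¹) (quantileF μ u + C⁻¹), 0 < fW x) ∧
    fW (quantileF μ u) + (fW (quantileF μ u))⁻¹ ≤ C ∧
    ∀ η ∈ Set.Icc (0 : ℝ) 1, ∀ x ∈ Set.Icc (quantileF μ u - C⁻¹) (quantileF μ u + C⁻¹),
      ∀ y ∈ Set.Icc (quantileF μ u - C⁻¹) (quantileF μ u + C⁻¹),
        |x - y| ≤ η → |fW x - fW y| ≤ g η

/-- The class `𝒢₇(β, C, u, g) = 𝒢₃(β, C) ∩ 𝒢_u^*(C, g)`. -/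
def memG7 (β C u : ℝ) (g : ℝ → ℝ) (μ : Measure ℝ) : Prop :=
  memG3 β C μ ∧ memGstar u g C μ

/-- The class `𝒢₈(β, C, u, g)`: members of `𝒢₄(β, C) ∩ 𝒢_u^*(C, g)` with `|ξ_u| > C⁻¹`. -/
def memG8 (β C u : ℝ) (g : ℝ → ℝ) (μ : Measure ℝ) : Prop :=
  memG4 β C μ ∧ memGstar u g C μ ∧ C⁻¹ < |quantileF μ u|


/-! ### Sine integrals and Abel weights -/

lemma integrable_exp_neg_mul_abs {ε : ℝ} (hε : 0 < ε) :
    Integrable (fun t : ℝ => Real.exp (-(ε * |t|))) := by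
  rw [← integrableOn_univ, ← Set.Iic_union_Ioi (a := (0 : ℝ)), integrableOn_union]
  constructor
  · refine (integrableOn_exp_mul_Iic hε 0).congr_fun (fun t ht => ?_) measurableSet_Iic
    simp only [Set.mem_Iic] at ht
    simp [abs_of_nonpos ht]
  · refine (integrableOn_exp_mul_Ioi (neg_lt_zero.2 hε) 0).congr_fun (fun t ht => ?_)
      measurableSet_Ioi
    simp only [Set.mem_Ioi] at ht
    simp [abs_of_pos ht]

lemma integrable_cos_mul_exp {ε : ℝ} (hε : 0 < ε) (v : ℝ) :
    Integrable (fun t : ℝ => Real.cos (t * v) * Real.exp (-(ε * |t|))) := by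
  refine (integrable_exp_neg_mul_abs hε).bdd_mul (c := 1) (by fun_prop) ?_
  exact ae_of_all _ fun t => by simpa using Real.abs_cos_le_one _

/-- The Fourier transform of the Laplace density is the Cauchy kernel. -/
lemma integral_cos_mul_exp {ε : ℝ} (hε : 0 < ε) (v : ℝ) :
    ∫ t : ℝ, Real.cos (t * v) * Real.exp (-(ε * |t|)) = 2 * ε / (ε ^ 2 + v ^ 2) := by
  have h1 : ∀ t : ℝ, Real.cos (t * v) * Real.exp (-(ε * |t|)) =
      (fun y => Real.cos (y * v) * Real.exp (-(ε * y))) |t| := by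
    intro t
    rcases abs_choice t with h | h <;> simp [h]
  simp_rw [h1]
  rw [integral_comp_abs (f := fun y => Real.cos (y * v) * Real.exp (-(ε * y)))]
  have hre : ((-ε + v * Complex.I : ℂ)).re < 0 := by simp [hε]
  have h2 := integral_exp_mul_complex_Ioi hre 0
  have h3 := integrableOn_exp_mul_complex_Ioi hre 0
  have h4 : ∫ t in Set.Ioi (0 : ℝ), Real.cos (t * v) * Real.exp (-(ε * t)) =
      (∫ t in Set.Ioi (0 : ℝ), Complex.exp ((-ε + v * Complex.I : ℂ) * t)).re := by
    rw [← RCLike.re_to_complex, ← integral_re h3]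
    refine integral_congr_ae (ae_of_all _ fun t => ?_)
    simp [Complex.exp_re, mul_comm]
  rw [h4, h2]
  have : ε ^ 2 + v ^ 2 ≠ 0 := by positivity
  simp [Complex.div_re, Complex.normSq]
  field_simp

lemma abs_sin_div_le (t u : ℝ) : |Real.sin (t * u) / t| ≤ |u| := by
  rcases eq_or_ne t 0 with rfl | ht
  · simp
  · rw [abs_div, div_le_iff₀ (abs_pos.2 ht), mul_comm |u|, ← abs_mul]
    exact Real.abs_sin_le_abs

lemma abs_sin_div_le' (t u : ℝ) : |Real.sin (t * u) / t| ≤ |t|⁻¹ := by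
  rw [abs_div, div_eq_mul_inv]
  exact mul_le_of_le_one_left (by positivity) (Real.abs_sin_le_one _)

lemma integrable_sin_div_mul {k : ℝ → ℝ} (hk : Integrable k) (u : ℝ) :
    Integrable (fun t : ℝ => Real.sin (t * u) / t * k t) := by
  refine hk.bdd_mul (c := |u|) ?_ (ae_of_all _ fun t => ?_)
  · exact (Measurable.div (by fun_prop) measurable_id).aestronglyMeasurable
  · exact abs_sin_div_le t u

/-- The Abel means of the sine integral; both sides vanish at `u = 0` and have the same
derivative in `u`. -/
lemma integral_sin_div_mul_exp {ε : ℝ} (hε : 0 < ε) (u : ℝ) :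
    ∫ t : ℝ, Real.sin (t * u) / t * Real.exp (-(ε * |t|)) = 2 * Real.arctan (u / ε) := by
  have key : ∀ u : ℝ, HasDerivAt (fun u => (∫ t : ℝ, Real.sin (t * u) / t *
      Real.exp (-(ε * |t|))) - 2 * Real.arctan (u / ε)) 0 u := by
    intro u
    have h1 := (hasDerivAt_integral_of_dominated_loc_of_deriv_le (μ := volume) (x₀ := u)
      (F := fun u t : ℝ => Real.sin (t * u) / t * Real.exp (-(ε * |t|)))
      (F' := fun u t : ℝ => Real.cos (t * u) * Real.exp (-(ε * |t|)))
      (bound := fun t => Real.exp (-(ε * |t|))) (s := Set.univ) univ_mem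
      (Eventually.of_forall fun u =>
        (integrable_sin_div_mul (integrable_exp_neg_mul_abs hε) u).aestronglyMeasurable)
      (integrable_sin_div_mul (integrable_exp_neg_mul_abs hε) u)
      (integrable_cos_mul_exp hε u).aestronglyMeasurable
      (ae_of_all _ fun t v _ => by
        rw [norm_mul, Real.norm_eq_abs, Real.norm_eq_abs, Real.abs_exp]
        exact mul_le_of_le_one_left (Real.exp_pos _).le (Real.abs_cos_le_one _))
      (integrable_exp_neg_mul_abs hε) ?_).2
    · have h2 : HasDerivAt (fun u => 2 * Real.arctan (u / ε)) (2 * (1 / (1 + (u / ε) ^ 2) * (1 / ε))) u :=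
        (((hasDerivAt_id u).div_const ε).arctan).const_mul 2
      refine (h1.sub h2).congr_deriv ?_
      rw [integral_cos_mul_exp hε]
      have : ε ^ 2 + u ^ 2 ≠ 0 := by positivity
      field_simp
      ring
    · have h0 : ∀ᵐ t : ℝ, t ≠ 0 := by simp [ae_iff]
      filter_upwards [h0] with t ht v _
      have := ((((hasDerivAt_id v).const_mul t).sin.div_const t).mul_const
        (Real.exp (-(ε * |t|))))
      refine this.congr_deriv ?_
      simp only [id]
      field_simp
  have h := is_const_of_deriv_eq_zero (fun u => (key u).differentiableAt)
    (fun u => (key u).deriv) u 0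
  simp at h
  linarith

/-- A kernel that agrees with `exp (-a|t|)` to first order at the origin has, after truncation
to `|t| ≤ 1/a`, a sine integral that is bounded uniformly in the frequency `u`. -/
lemma abs_setIntegral_sin_div_le {a A : ℝ} (ha : 0 < a) {g : ℝ → ℝ} (hg : Measurable g)
    (hgA : ∀ t, |t| ≤ a⁻¹ → |g t - Real.exp (-(a * |t|))| ≤ A * (a * |t|)) (u : ℝ) :
    |∫ t in {t : ℝ | |t| ≤ a⁻¹}, Real.sin (t * u) / t * g t| ≤ Real.pi + 2 * A + 2 := by
  set S : Set ℝ := {t : ℝ | |t| ≤ a⁻¹} with hS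
  have hSm : MeasurableSet S := measurableSet_le measurable_id.abs measurable_const
  have hSI : S = Set.Icc (-a⁻¹) a⁻¹ := by ext t; simp [hS, abs_le]
  have hSv : volume S = ENNReal.ofReal (2 * a⁻¹) := by
    rw [hSI, Real.volume_Icc]; congr 1; ring
  have hSf : volume S < ⊤ := by rw [hSv]; exact ENNReal.ofReal_lt_top
  have hSr : volume.real S = 2 * a⁻¹ := by
    rw [Measure.real, hSv, ENNReal.toReal_ofReal (by positivity)]
  have hE := integrable_sin_div_mul (integrable_exp_neg_mul_abs ha) u
  -- On `S` the deviation from `exp (-a|t|)` cancels the pole of `sin (tu) / t`, and `S` has length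
  -- `2 / a`; off `S`, `|sin (tu) / t| ≤ a`. What remains is an arctangent.
  have hpt : ∀ t ∈ S, ‖Real.sin (t * u) / t * (g t - Real.exp (-(a * |t|)))‖ ≤ A * a := by
    intro t ht
    rcases eq_or_ne t 0 with rfl | h0
    · have h1 := hgA a⁻¹ (by rw [abs_of_pos (inv_pos.2 ha)])
      have : 0 ≤ A * (a * |a⁻¹|) := (abs_nonneg _).trans h1
      have h2 : 0 ≤ A := by
        rw [abs_of_pos (inv_pos.2 ha), mul_inv_cancel₀ ha.ne'] at this; linarith
      simp; positivity
    · rw [norm_mul, Real.norm_eq_abs, Real.norm_eq_abs]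
      calc _ ≤ |t|⁻¹ * (A * (a * |t|)) :=
            mul_le_mul (abs_sin_div_le' t u) (hgA t ht) (abs_nonneg _) (by positivity)
        _ = A * a := by have := abs_pos.2 h0; field_simp
  have hD : IntegrableOn (fun t => Real.sin (t * u) / t * (g t - Real.exp (-(a * |t|)))) S := by
    refine Measure.integrableOn_of_bounded (M := A * a) hSf.ne ?_ ?_
    · have : Measurable fun t : ℝ => Real.sin (t * u) / t :=
        Measurable.div (by fun_prop) measurable_id
      exact (this.mul (hg.sub (by fun_prop))).aestronglyMeasurable
    · exact (ae_restrict_iff' hSm).2 (ae_of_all _ hpt)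
  have h1 : |∫ t in S, Real.sin (t * u) / t * (g t - Real.exp (-(a * |t|)))| ≤ 2 * A := by
    have := norm_setIntegral_le_of_norm_le_const (μ := volume) hSf hpt
    rw [hSr] at this
    refine this.trans (le_of_eq ?_)
    field_simp
  have h2 : |∫ t in Sᶜ, Real.sin (t * u) / t * Real.exp (-(a * |t|))| ≤ 2 := by
    have hb : |∫ t in Sᶜ, Real.sin (t * u) / t * Real.exp (-(a * |t|))| ≤
        ∫ t in Sᶜ, a * Real.exp (-(a * |t|)) := by
      rw [← Real.norm_eq_abs]
      refine norm_integral_le_of_norm_le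
        (((integrable_exp_neg_mul_abs ha).const_mul a).integrableOn) ?_
      refine (ae_restrict_iff' hSm.compl).2 (ae_of_all _ fun t ht => ?_)
      have ht' : a⁻¹ < |t| := by simpa [hS] using ht
      rw [norm_mul, Real.norm_eq_abs, Real.norm_eq_abs, Real.abs_exp]
      gcongr
      exact (abs_sin_div_le' t u).trans (inv_le_of_inv_le₀ ha ht'.le)
    have hc : ∫ t in Sᶜ, a * Real.exp (-(a * |t|)) ≤ ∫ t, a * Real.exp (-(a * |t|)) :=
      setIntegral_le_integral ((integrable_exp_neg_mul_abs ha).const_mul a)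
        (ae_of_all _ fun t => by simp only [Pi.zero_apply]; positivity)
    have hd : ∫ t, a * Real.exp (-(a * |t|)) = 2 := by
      have := integral_cos_mul_exp ha 0
      simp at this
      rw [integral_const_mul, this]; field_simp
    linarith
  have h3 : |∫ t, Real.sin (t * u) / t * Real.exp (-(a * |t|))| ≤ Real.pi := by
    rw [integral_sin_div_mul_exp ha, abs_le]
    have := Real.arctan_lt_pi_div_two (u / a)
    have := Real.neg_pi_div_two_lt_arctan (u / a)
    constructor <;> linarith
  have h4 : ∫ t in S, Real.sin (t * u) / t * g t =
      (∫ t in S, Real.sin (t * u) / t * (g t - Real.exp (-(a * |t|)))) +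
      ((∫ t, Real.sin (t * u) / t * Real.exp (-(a * |t|))) -
        ∫ t in Sᶜ, Real.sin (t * u) / t * Real.exp (-(a * |t|))) := by
    rw [← integral_add_compl hSm hE, add_sub_cancel_right, ← integral_add hD hE.integrableOn]
    congr 1; ext t; ring
  rw [h4]
  calc _ ≤ _ := abs_add_le _ _
    _ ≤ 2 * A + (Real.pi + 2) := by
        gcongr
        exact (abs_sub _ _).trans (by gcongr)
    _ = _ := by ring

/-! ### Sample means, characteristic functions and Fubini -/

open ProbabilityTheory in
/-- Bias-variance bound for a sample mean of i.i.d. terms `g (X j)`. -/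
lemma lintegral_sq_mean_sub_le {ν : Measure ℝ} [IsProbabilityMeasure ν] {g : ℝ → ℝ}
    (hg : MemLp g 2 ν) {n : ℕ} (hn : 1 ≤ n) (θ : ℝ) :
    ∫⁻ X : Fin n → ℝ, ENNReal.ofReal (((n : ℝ)⁻¹ * ∑ j, g (X j) - θ) ^ 2)
        ∂(Measure.pi fun _ => ν) ≤
      ENNReal.ofReal ((n : ℝ)⁻¹ * ∫ y, g y ^ 2 ∂ν + (∫ y, g y ∂ν - θ) ^ 2) := by
  set P : Measure (Fin n → ℝ) := Measure.pi fun _ => ν with hP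
  have hn0 : (n : ℝ) ≠ 0 := by positivity
  have hgj : ∀ j : Fin n, MemLp (fun X : Fin n → ℝ => g (X j)) 2 P := fun j =>
    hg.comp_measurePreserving (measurePreserving_eval (fun _ : Fin n => ν) j)
  set S : (Fin n → ℝ) → ℝ := fun X => ∑ j, g (X j) with hS
  have hSm : MemLp S 2 P := memLp_finsetSum _ fun j _ => hgj j
  set T : (Fin n → ℝ) → ℝ := fun X => (n : ℝ)⁻¹ * S X - θ with hT
  have hTm : MemLp T 2 P := (hSm.const_mul _).sub (memLp_const θ)
  have hES : ∫ X, S X ∂P = n * ∫ y, g y ∂ν := by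
    rw [hS, integral_finsetSum _ fun j _ => (hgj j).integrable (by norm_num)]
    simp_rw [hP]
    rw [Finset.sum_congr rfl fun j _ => integral_comp_eval (μ := fun _ : Fin n => ν) (i := j)
      hg.aestronglyMeasurable]
    simp
  have hET : ∫ X, T X ∂P = ∫ y, g y ∂ν - θ := by
    rw [hT, integral_sub ((hSm.integrable (by norm_num)).const_mul _) (integrable_const _),
      integral_const_mul, hES]
    simp [hn0]
  have hVS : variance S P = n * variance g ν := by
    have := variance_sum_pi (μ := fun _ : Fin n => ν) (X := fun _ => g) (fun _ => hg)
    have h2 : S = ∑ i, fun ω : Fin n → ℝ => g (ω i) := by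
      ext X; simp [hS]
    rw [h2, this]; simp
  have hVT : variance T P = (n : ℝ)⁻¹ * variance g ν := by
    rw [hT, variance_sub_const (hSm.const_mul _).aestronglyMeasurable, variance_const_mul, hVS]
    field_simp
  have h1 := variance_eq_sub hTm
  have h2 : variance g ν ≤ ∫ y, g y ^ 2 ∂ν := variance_le_expectation_sq hg.aestronglyMeasurable
  have h3 : ∫ X, T X ^ 2 ∂P ≤ (n : ℝ)⁻¹ * ∫ y, g y ^ 2 ∂ν + (∫ y, g y ∂ν - θ) ^ 2 := by
    have h4 : ∫ X, T X ^ 2 ∂P = variance T P + (∫ X, T X ∂P) ^ 2 := by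
      rw [h1]; simp
    rw [h4, hVT, hET]
    gcongr
  rw [← ofReal_integral_eq_lintegral_ofReal hTm.integrable_sq
    (ae_of_all _ fun X => sq_nonneg _)]
  exact ENNReal.ofReal_le_ofReal h3

lemma integrable_abs_of_absMomBdd {μ : Measure ℝ} {C : ℝ} (h : absMomBdd μ 1 C) :
    Integrable (fun x => |x|) μ := by
  refine ⟨by fun_prop, ?_⟩
  simp only [absMomBdd, Real.rpow_one] at h
  rw [hasFiniteIntegral_iff_ofReal (ae_of_all _ fun x => abs_nonneg x)]
  exact h.trans_lt ENNReal.ofReal_lt_top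

lemma integral_abs_le_of_absMomBdd {μ : Measure ℝ} {C : ℝ} (hC : 0 ≤ C) (h : absMomBdd μ 1 C) :
    ∫ x, |x| ∂μ ≤ C := by
  have hi := integrable_abs_of_absMomBdd h
  simp only [absMomBdd, Real.rpow_one] at h
  rw [← ofReal_integral_eq_lintegral_ofReal hi (ae_of_all _ fun x => abs_nonneg x)] at h
  exact (ENNReal.ofReal_le_ofReal_iff hC).1 h

lemma integrable_cos_comp {μ : Measure ℝ} [IsProbabilityMeasure μ] {φ : ℝ → ℝ}
    (hφ : Measurable φ) : Integrable (fun y => Real.cos (φ y)) μ :=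
  .of_bound (by fun_prop) 1 (ae_of_all _ fun y => by simpa using Real.abs_cos_le_one _)

lemma integrable_sin_comp {μ : Measure ℝ} [IsProbabilityMeasure μ] {φ : ℝ → ℝ}
    (hφ : Measurable φ) : Integrable (fun y => Real.sin (φ y)) μ :=
  .of_bound (by fun_prop) 1 (ae_of_all _ fun y => by simpa using Real.abs_sin_le_one _)

lemma charFn_eq (μ : Measure ℝ) [IsProbabilityMeasure μ] (t : ℝ) :
    charFn μ t = (∫ y, Real.cos (t * y) ∂μ : ℝ) + (∫ y, Real.sin (t * y) ∂μ : ℝ) * Complex.I := by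
  have h : ∀ y : ℝ, Complex.exp (Complex.I * (t * y)) =
      (Real.cos (t * y) : ℂ) + (Real.sin (t * y) : ℂ) * Complex.I := by
    intro y
    rw [mul_comm, Complex.exp_mul_I]; push_cast; rfl
  simp_rw [charFn, h]
  rw [integral_add (integrable_cos_comp (by fun_prop)).ofReal
    ((integrable_sin_comp (by fun_prop)).ofReal.mul_const _), integral_mul_const,
    integral_complex_ofReal,
    integral_complex_ofReal]

lemma integral_cos_shift (μ : Measure ℝ) [IsProbabilityMeasure μ] (t x : ℝ) :
    ∫ w, Real.cos (t * (x - w)) ∂μ =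
      Real.cos (t * x) * (charFn μ t).re + Real.sin (t * x) * (charFn μ t).im := by
  simp_rw [mul_sub, Real.cos_sub]
  rw [integral_add ((integrable_cos_comp (by fun_prop)).const_mul _)
    ((integrable_sin_comp (by fun_prop)).const_mul _), integral_const_mul, integral_const_mul,
    charFn_eq]
  simp

lemma integral_sin_shift (μ : Measure ℝ) [IsProbabilityMeasure μ] (t x : ℝ) :
    ∫ w, Real.sin (t * (x - w)) ∂μ =
      Real.sin (t * x) * (charFn μ t).re - Real.cos (t * x) * (charFn μ t).im := by
  simp_rw [mul_sub, Real.sin_sub]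
  rw [integral_sub ((integrable_cos_comp (by fun_prop)).const_mul _)
    ((integrable_sin_comp (by fun_prop)).const_mul _), integral_const_mul, integral_const_mul,
    charFn_eq]
  simp

lemma abs_integral_cos_shift_le (μ : Measure ℝ) [IsProbabilityMeasure μ] (t x : ℝ) :
    |∫ w, Real.cos (t * (x - w)) ∂μ| ≤ 2 * ‖charFn μ t‖ := by
  rw [integral_cos_shift]
  refine (abs_add_le _ _).trans ?_
  rw [abs_mul, abs_mul, two_mul]
  gcongr
  · exact (mul_le_of_le_one_left (abs_nonneg _) (Real.abs_cos_le_one _)).trans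
      (Complex.abs_re_le_norm _)
  · exact (mul_le_of_le_one_left (abs_nonneg _) (Real.abs_sin_le_one _)).trans
      (Complex.abs_im_le_norm _)

lemma abs_integral_sin_shift_le (μ : Measure ℝ) [IsProbabilityMeasure μ] (t x : ℝ) :
    |∫ w, Real.sin (t * (x - w)) ∂μ| ≤ 2 * ‖charFn μ t‖ := by
  rw [integral_sin_shift]
  refine (abs_sub _ _).trans ?_
  rw [abs_mul, abs_mul, two_mul]
  gcongr
  · exact (mul_le_of_le_one_left (abs_nonneg _) (Real.abs_sin_le_one _)).trans
      (Complex.abs_re_le_norm _)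
  · exact (mul_le_of_le_one_left (abs_nonneg _) (Real.abs_cos_le_one _)).trans
      (Complex.abs_im_le_norm _)

lemma realCharFn.eq_integral_cos {μ : Measure ℝ} {f : ℝ → ℝ} (h : realCharFn μ f) (t : ℝ) :
    f t = ∫ y, Real.cos (t * y) ∂μ := by
  have := h.1
  have h2 := congrArg Complex.re (h.2 t)
  rw [charFn_eq] at h2
  simpa using h2.symm

lemma realCharFn.integral_sin {μ : Measure ℝ} {f : ℝ → ℝ} (h : realCharFn μ f) (t : ℝ) :
    ∫ y, Real.sin (t * y) ∂μ = 0 := by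
  have := h.1
  have h2 := congrArg Complex.im (h.2 t)
  rw [charFn_eq] at h2
  simpa using h2

lemma realCharFn.measurable {μ : Measure ℝ} {f : ℝ → ℝ} (h : realCharFn μ f) : Measurable f := by
  have := h.1
  have h2 : f = fun t => ∫ y, Real.cos (t * y) ∂μ := funext h.eq_integral_cos
  rw [h2]
  have : StronglyMeasurable (Function.uncurry fun t y : ℝ => Real.cos (t * y)) :=
    Continuous.stronglyMeasurable (by fun_prop)
  exact this.integral_prod_right.measurable

lemma realCharFn.le_one {μ : Measure ℝ} {f : ℝ → ℝ} (h : realCharFn μ f) (t : ℝ) : f t ≤ 1 := by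
  have := h.1
  rw [h.eq_integral_cos]
  calc _ ≤ ∫ _, (1 : ℝ) ∂μ :=
        integral_mono (integrable_cos_comp (by fun_prop)) (integrable_const _)
          fun y => Real.cos_le_one _
    _ = 1 := by simp

lemma one_sub_cos_le_abs (z : ℝ) : 1 - Real.cos z ≤ |z| := by
  have h1 := Real.one_sub_sq_div_two_le_cos (x := z)
  have h2 := Real.neg_one_le_cos z
  rw [← sq_abs] at h1
  by_cases h : |z| ≤ 2
  · nlinarith [abs_nonneg z]
  · push Not at h; linarith

lemma realCharFn.one_sub_le {μ : Measure ℝ} {f : ℝ → ℝ} {C : ℝ} (hC : 0 ≤ C)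
    (h : realCharFn μ f) (hm : absMomBdd μ 1 C) (t : ℝ) : 1 - f t ≤ C * |t| := by
  have := h.1
  rw [h.eq_integral_cos]
  have h1 : (1 : ℝ) - ∫ y, Real.cos (t * y) ∂μ = ∫ y, (1 - Real.cos (t * y)) ∂μ := by
    rw [integral_sub (integrable_const _) (integrable_cos_comp (by fun_prop))]; simp
  rw [h1]
  calc _ ≤ ∫ y, |t| * |y| ∂μ := by
        refine integral_mono ((integrable_const _).sub (integrable_cos_comp (by fun_prop)))
          ((integrable_abs_of_absMomBdd hm).const_mul _) fun y => ?_
        simp only [← abs_mul]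
        exact one_sub_cos_le_abs _
    _ ≤ _ := by
        rw [integral_const_mul, mul_comm]
        gcongr
        exact integral_abs_le_of_absMomBdd hC hm

/-- Fubini for a kernel `b t y` dominated in `y` and weighted by an integrable `k t`. -/
lemma integral_mul_kernel_swap {ν : Measure ℝ} [SFinite ν] {b : ℝ → ℝ → ℝ} {c k : ℝ → ℝ}
    (hb : Measurable (Function.uncurry b)) (hbc : ∀ t y, |b t y| ≤ c y) (hc : Integrable c ν)
    (hk : Integrable k) :
    ∫ t, (∫ y, b t y ∂ν) * k t = ∫ y, (∫ t, b t y * k t) ∂ν := by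
  have h : ∀ t, (∫ y, b t y ∂ν) * k t = ∫ y, b t y * k t ∂ν := fun t =>
    (integral_mul_const _ _).symm
  rw [integral_congr_ae (ae_of_all _ h)]
  refine integral_integral_swap (f := fun t y => b t y * k t) ?_
  refine Integrable.mono' (hk.norm.mul_prod hc) ?_ (ae_of_all _ fun z => ?_)
  · exact hb.aestronglyMeasurable.mul (hk.aestronglyMeasurable.comp_fst (ν := ν))
  · simp only [Function.uncurry, norm_mul, Real.norm_eq_abs]
    rw [mul_comm]
    gcongr
    exact hbc _ _

/-! ### Integrability of the error characteristic function -/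

lemma lintegral_cauchy_kernel {ε : ℝ} (hε : 0 < ε) :
    ∫⁻ y : ℝ, ENNReal.ofReal (2 * ε / (ε ^ 2 + y ^ 2)) = ENNReal.ofReal (2 * Real.pi) := by
  have h : ∀ y : ℝ, 2 * ε / (ε ^ 2 + y ^ 2) = 2 / ε * (fun z : ℝ => (1 + z ^ 2)⁻¹) (ε⁻¹ * y) := by
    intro y
    have : ε ^ 2 + y ^ 2 ≠ 0 := by positivity
    have : 1 + (ε⁻¹ * y) ^ 2 ≠ 0 := by positivity
    field_simp
  have hi : Integrable (fun y : ℝ => 2 * ε / (ε ^ 2 + y ^ 2)) := by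
    simp_rw [h]
    exact (integrable_inv_one_add_sq.comp_mul_left' (inv_ne_zero hε.ne')).const_mul _
  rw [← ofReal_integral_eq_lintegral_ofReal hi (ae_of_all _ fun y => by
    simp only [Pi.zero_apply]; positivity)]
  congr 1
  simp_rw [h]
  rw [integral_const_mul, Measure.integral_comp_mul_left (fun z : ℝ => (1 + z ^ 2)⁻¹),
    integral_univ_inv_one_add_sq]
  simp [abs_of_pos hε]
  field_simp

/-- A nonnegative characteristic function of a law with density bounded by `C` is integrable with
integral at most `2πC`: its Abel means are Cauchy smoothings of the density at the origin. -/
lemma lintegral_charFn_le {C : ℝ} {μ : Measure ℝ} {f : ℝ → ℝ} (h : realCharFn μ f)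
    (hf : ∀ t, 0 < f t) (hd : hasDensityBdd μ C) :
    ∫⁻ t, ENNReal.ofReal (f t) ≤ ENNReal.ofReal C * ENNReal.ofReal (2 * Real.pi) := by
  have := h.1
  have hfm := h.measurable
  have hε : ∀ k : ℕ, (0 : ℝ) < 1 / ((k : ℝ) + 1) := fun k => by positivity
  have hb : ∀ k : ℕ, ∫⁻ t, ENNReal.ofReal (f t * Real.exp (-((1 / ((k : ℝ) + 1)) * |t|))) ≤
      ENNReal.ofReal C * ENNReal.ofReal (2 * Real.pi) := by
    intro k
    set ε := 1 / ((k : ℝ) + 1) with hεk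
    have hε : 0 < ε := hε k
    have hint : Integrable fun t => f t * Real.exp (-(ε * |t|)) := by
      refine (integrable_exp_neg_mul_abs hε).bdd_mul (c := 1) hfm.aestronglyMeasurable
        (ae_of_all _ fun t => ?_)
      rw [Real.norm_eq_abs, abs_of_pos (hf t)]; exact h.le_one t
    have h1 : ∫ t, f t * Real.exp (-(ε * |t|)) = ∫ y, 2 * ε / (ε ^ 2 + y ^ 2) ∂μ := by
      simp_rw [h.eq_integral_cos]
      rw [integral_mul_kernel_swap (b := fun t y => Real.cos (t * y)) (c := fun _ => 1)
        (Continuous.measurable (by fun_prop)) (fun t y => Real.abs_cos_le_one _)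
        (integrable_const _) (integrable_exp_neg_mul_abs hε)]
      simp_rw [integral_cos_mul_exp hε]
    rw [← ofReal_integral_eq_lintegral_ofReal hint (ae_of_all _ fun t =>
      mul_nonneg (hf t).le (Real.exp_pos _).le), h1]
    have h2 : ENNReal.ofReal (∫ y, 2 * ε / (ε ^ 2 + y ^ 2) ∂μ) ≤
        ∫⁻ y, ENNReal.ofReal (2 * ε / (ε ^ 2 + y ^ 2)) ∂μ := by
      rw [integral_eq_lintegral_of_nonneg_ae]
      · exact ENNReal.ofReal_toReal_le
      · exact ae_of_all _ fun y => by simp only [Pi.zero_apply]; positivity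
      · exact Measurable.aestronglyMeasurable (by fun_prop)
    refine h2.trans ?_
    obtain ⟨p, hpm, hp0, hpC, hμ⟩ := hd
    rw [hμ, lintegral_withDensity_eq_lintegral_mul _ hpm.ennreal_ofReal (by fun_prop),
      ← lintegral_cauchy_kernel hε, ← lintegral_const_mul _ (by fun_prop)]
    refine lintegral_mono fun y => ?_
    simp only [Pi.mul_apply]
    gcongr
    exact hpC y
  have hlim : ∀ t, Tendsto (fun k : ℕ => ENNReal.ofReal
      (f t * Real.exp (-((1 / ((k : ℝ) + 1)) * |t|)))) atTop (𝓝 (ENNReal.ofReal (f t))) := by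
    intro t
    refine (ENNReal.continuous_ofReal.tendsto _).comp ?_
    have h0 : Tendsto (fun k : ℕ => -((1 / ((k : ℝ) + 1)) * |t|)) atTop (𝓝 (-(0 * |t|))) :=
      (tendsto_one_div_add_atTop_nhds_zero_nat.mul_const _).neg
    have := ((Real.continuous_exp.tendsto _).comp h0).const_mul (f t)
    simpa using this
  -- Fatou is used because integrability of `f` is part of what is being proved.
  calc ∫⁻ t, ENNReal.ofReal (f t)
      = ∫⁻ t, liminf (fun k : ℕ => ENNReal.ofReal
          (f t * Real.exp (-((1 / ((k : ℝ) + 1)) * |t|)))) atTop := by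
        simp_rw [fun t => (hlim t).liminf_eq]
    _ ≤ liminf (fun k : ℕ => ∫⁻ t, ENNReal.ofReal
          (f t * Real.exp (-((1 / ((k : ℝ) + 1)) * |t|)))) atTop :=
        lintegral_liminf_le fun k => by fun_prop
    _ ≤ _ := liminf_le_of_le (by isBoundedDefault) fun b hb' => by
        obtain ⟨k, hk⟩ := hb'.exists
        exact hk.trans (hb k)

lemma integrable_charFn {C : ℝ} {μ : Measure ℝ} {f : ℝ → ℝ} (h : realCharFn μ f)
    (hf : ∀ t, 0 < f t) (hd : hasDensityBdd μ C) : Integrable f := by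
  refine ⟨h.measurable.aestronglyMeasurable, ?_⟩
  rw [hasFiniteIntegral_iff_ofReal (ae_of_all _ fun x => (hf x).le)]
  exact (lintegral_charFn_le h hf hd).trans_lt
    (ENNReal.mul_lt_top ENNReal.ofReal_lt_top ENNReal.ofReal_lt_top)

lemma integral_charFn_le {C : ℝ} (hC : 0 ≤ C) {μ : Measure ℝ} {f : ℝ → ℝ} (h : realCharFn μ f)
    (hf : ∀ t, 0 < f t) (hd : hasDensityBdd μ C) : ∫ t, f t ≤ 2 * Real.pi * C := by
  have h1 := lintegral_charFn_le h hf hd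
  rw [← ofReal_integral_eq_lintegral_ofReal (integrable_charFn h hf hd)
    (ae_of_all _ fun x => (hf x).le), ← ENNReal.ofReal_mul hC] at h1
  rw [mul_comm]
  exact (ENNReal.ofReal_le_ofReal_iff (by positivity)).1 h1

/-- The class `ℱ₃(α, C)` is empty unless `α > 1`, because its characteristic functions are
integrable. -/
lemma one_lt_of_memF3 {α C : ℝ} (hα : 0 < α) {μ : Measure ℝ} {f : ℝ → ℝ}
    (h : memF3 α C μ f) : 1 < α := by
  obtain ⟨hr, hf, hlow, hd, -⟩ := h
  have hi := integrable_charFn hr hf hd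
  have h1 : IntegrableOn (fun t : ℝ => t ^ (-α)) (Set.Ioi 1) := by
    refine Integrable.mono' ((hi.const_mul (2 ^ α * C)).integrableOn) ?_ ?_
    · exact (Measurable.pow_const measurable_id _).aestronglyMeasurable
    · refine (ae_restrict_iff' measurableSet_Ioi).2 (ae_of_all _ fun t ht => ?_)
      have ht : 1 < t := ht
      have ht0 : 0 < t := by linarith
      rw [Real.norm_eq_abs, abs_of_nonneg (by positivity), mul_assoc]
      calc t ^ (-α) = 2 ^ α * (2 * t) ^ (-α) := by
            rw [Real.mul_rpow (by norm_num) ht0.le, ← mul_assoc, ← Real.rpow_add (by norm_num)]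
            simp
        _ ≤ 2 ^ α * (1 + |t|) ^ (-α) := by
            gcongr 2 ^ α * ?_
            refine Real.rpow_le_rpow_of_nonpos (by positivity) ?_ (by linarith)
            rw [abs_of_pos ht0]; linarith
        _ ≤ _ := by gcongr; exact hlow t
  have := (integrableOn_Ioi_rpow_iff one_pos).1 h1
  linarith

/-- The integral behind Schur's test for the convolution kernel `f (t - s)`. -/
lemma integral_schur_eq {f G : ℝ → ℝ} (hfi : Integrable f)
    (hG2 : Integrable fun t => G t ^ 2) :
    Integrable (fun z : ℝ × ℝ => (G z.1 ^ 2 + G z.2 ^ 2) / 2 * f (z.1 - z.2))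
      (volume.prod volume) ∧
    ∫ z : ℝ × ℝ, (G z.1 ^ 2 + G z.2 ^ 2) / 2 * f (z.1 - z.2) ∂(volume.prod volume) =
      (∫ t, G t ^ 2) * ∫ t, f t := by
  have h1 : Integrable (fun z : ℝ × ℝ => G z.2 ^ 2 * f (z.1 - z.2)) (volume.prod volume) := by
    simpa using hG2.convolution_integrand (ContinuousLinearMap.mul ℝ ℝ) hfi
  have hfn : Integrable fun t => f (-t) := hfi.comp_neg
  have h2 : Integrable (fun z : ℝ × ℝ => G z.1 ^ 2 * f (z.1 - z.2)) (volume.prod volume) := by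
    have := (hG2.convolution_integrand (ContinuousLinearMap.mul ℝ ℝ) hfn).swap
    simpa [Function.comp_def] using this
  have e1 : ∫ z : ℝ × ℝ, G z.2 ^ 2 * f (z.1 - z.2) ∂(volume.prod volume) =
      (∫ t, G t ^ 2) * ∫ t, f t := by
    rw [integral_prod_symm _ h1]
    simp_rw [integral_const_mul, integral_sub_right_eq_self f, integral_mul_const]
  have e2 : ∫ z : ℝ × ℝ, G z.1 ^ 2 * f (z.1 - z.2) ∂(volume.prod volume) =
      (∫ t, G t ^ 2) * ∫ t, f t := by
    rw [integral_prod _ h2]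
    simp_rw [integral_const_mul, integral_sub_left_eq_self f, integral_mul_const]
  have e3 : (fun z : ℝ × ℝ => (G z.1 ^ 2 + G z.2 ^ 2) / 2 * f (z.1 - z.2)) = fun z =>
      (1 / 2) * (G z.1 ^ 2 * f (z.1 - z.2) + G z.2 ^ 2 * f (z.1 - z.2)) := by
    ext z; ring
  rw [e3]
  refine ⟨(h2.add h1).const_mul _, ?_⟩
  rw [integral_const_mul, integral_add h2 h1, e1, e2]
  ring

/-! ### Sine transforms under the law of an observation -/

/-- Second moment of a sine transform under a law whose shifted cosine transform is dominated by
an integrable `f`. -/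
lemma integral_sq_sineTransform_le {ν : Measure ℝ} [IsProbabilityMeasure ν] {f G : ℝ → ℝ} {x : ℝ}
    (hfi : Integrable f) (hν : ∀ τ, |∫ y, Real.cos (τ * (x - y)) ∂ν| ≤ f τ)
    (hG : Integrable G) (hG2 : Integrable fun t => G t ^ 2) :
    ∫ y, (∫ t, Real.sin (t * (x - y)) * G t) ^ 2 ∂ν ≤ (∫ t, G t ^ 2) * ∫ t, f t := by
  set F : ℝ → ℝ × ℝ → ℝ := fun y z => Real.cos ((z.1 - z.2) * (x - y)) * (G z.1 * G z.2) with hF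
  have hFi : Integrable (Function.uncurry F) (ν.prod (volume.prod volume)) := by
    have h1 := (integrable_const (1 : ℝ) (μ := ν)).mul_prod (hG.mul_prod hG)
    refine (h1.bdd_mul (c := 1) (f := fun p : ℝ × ℝ × ℝ =>
      Real.cos ((p.2.1 - p.2.2) * (x - p.1))) ?_ ?_).congr ?_
    · exact Continuous.aestronglyMeasurable (by fun_prop)
    · exact ae_of_all _ fun p => by simpa using Real.abs_cos_le_one _
    · exact ae_of_all _ fun p => by simp [Function.uncurry, hF]
  -- The squares of the sine and cosine transforms add up to a double cosine integral.
  have hpt : ∀ y, (∫ t, Real.sin (t * (x - y)) * G t) ^ 2 ≤ ∫ z, F y z ∂(volume.prod volume) := by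
    intro y
    have hs : Integrable fun t => Real.sin (t * (x - y)) * G t :=
      hG.bdd_mul (c := 1) (Continuous.aestronglyMeasurable (by fun_prop))
        (ae_of_all _ fun t => by simpa using Real.abs_sin_le_one _)
    have hc : Integrable fun t => Real.cos (t * (x - y)) * G t :=
      hG.bdd_mul (c := 1) (Continuous.aestronglyMeasurable (by fun_prop))
        (ae_of_all _ fun t => by simpa using Real.abs_cos_le_one _)
    have h1 : ∀ z, F y z =
        (Real.cos (z.1 * (x - y)) * G z.1) * (Real.cos (z.2 * (x - y)) * G z.2) +
        (Real.sin (z.1 * (x - y)) * G z.1) * (Real.sin (z.2 * (x - y)) * G z.2) := by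
      intro z
      simp only [hF, sub_mul, Real.cos_sub]
      ring
    simp_rw [h1]
    rw [integral_add (hc.mul_prod hc) (hs.mul_prod hs),
      integral_prod_mul (fun t => Real.cos (t * (x - y)) * G t)
        (fun t => Real.cos (t * (x - y)) * G t),
      integral_prod_mul (fun t => Real.sin (t * (x - y)) * G t)
        (fun t => Real.sin (t * (x - y)) * G t)]
    nlinarith [sq_nonneg (∫ t, Real.cos (t * (x - y)) * G t)]
  have hsch := integral_schur_eq hfi hG2
  calc ∫ y, (∫ t, Real.sin (t * (x - y)) * G t) ^ 2 ∂ν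
      ≤ ∫ y, (∫ z, F y z ∂(volume.prod volume)) ∂ν :=
        integral_mono_of_nonneg (ae_of_all _ fun y => sq_nonneg _) hFi.integral_prod_left
          (ae_of_all _ hpt)
    _ = ∫ z, (∫ y, F y z ∂ν) ∂(volume.prod volume) := integral_integral_swap hFi
    _ ≤ ∫ z : ℝ × ℝ, (G z.1 ^ 2 + G z.2 ^ 2) / 2 * f (z.1 - z.2) ∂(volume.prod volume) := by
        refine integral_mono_ae hFi.integral_prod_right hsch.1 (ae_of_all _ fun z => ?_)
        simp only [hF]
        rw [integral_mul_const]
        have hf0 : 0 ≤ f (z.1 - z.2) := (abs_nonneg _).trans (hν _)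
        calc _ ≤ |(∫ y, Real.cos ((z.1 - z.2) * (x - y)) ∂ν) * (G z.1 * G z.2)| := le_abs_self _
          _ ≤ f (z.1 - z.2) * ((G z.1 ^ 2 + G z.2 ^ 2) / 2) := by
              rw [abs_mul]
              gcongr
              · exact hν _
              · rw [abs_le]
                constructor <;> nlinarith [sq_nonneg (G z.1 - G z.2), sq_nonneg (G z.1 + G z.2)]
          _ = _ := mul_comm _ _
    _ = _ := hsch.2

/-- The law of a single observation `W + δ`. -/
def obsLaw (μW μδ : Measure ℝ) : Measure ℝ := (μW.prod μδ).map fun p => p.1 + p.2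

lemma isProbabilityMeasure_obsLaw (μW μδ : Measure ℝ) [IsProbabilityMeasure μW]
    [IsProbabilityMeasure μδ] : IsProbabilityMeasure (obsLaw μW μδ) :=
  Measure.isProbabilityMeasure_map (by fun_prop)

lemma integral_cos_obsLaw {μW μδ : Measure ℝ} [IsProbabilityMeasure μW] {f : ℝ → ℝ}
    (h : realCharFn μδ f) (t x : ℝ) :
    ∫ y, Real.cos (t * (x - y)) ∂(obsLaw μW μδ) = f t * ∫ w, Real.cos (t * (x - w)) ∂μW := by
  have := h.1
  rw [obsLaw, integral_map (by fun_prop) (Continuous.aestronglyMeasurable (by fun_prop))]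
  have h1 : ∀ p : ℝ × ℝ, Real.cos (t * (x - (p.1 + p.2))) =
      Real.cos (t * (x - p.1)) * Real.cos (t * p.2) +
      Real.sin (t * (x - p.1)) * Real.sin (t * p.2) := by
    intro p
    rw [← Real.cos_sub]; congr 1; ring
  simp_rw [h1]
  rw [integral_add
    ((integrable_cos_comp (φ := fun w => t * (x - w)) (by fun_prop)).mul_prod
      (integrable_cos_comp (φ := fun d => t * d) (by fun_prop)))
    ((integrable_sin_comp (φ := fun w => t * (x - w)) (by fun_prop)).mul_prod
      (integrable_sin_comp (φ := fun d => t * d) (by fun_prop))),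
    integral_prod_mul (fun w => Real.cos (t * (x - w))) (fun d => Real.cos (t * d)),
    integral_prod_mul (fun w => Real.sin (t * (x - w))) (fun d => Real.sin (t * d)),
    h.integral_sin, ← h.eq_integral_cos]
  ring

lemma integral_sin_obsLaw {μW μδ : Measure ℝ} [IsProbabilityMeasure μW] {f : ℝ → ℝ}
    (h : realCharFn μδ f) (t x : ℝ) :
    ∫ y, Real.sin (t * (x - y)) ∂(obsLaw μW μδ) = f t * ∫ w, Real.sin (t * (x - w)) ∂μW := by
  have := h.1
  rw [obsLaw, integral_map (by fun_prop) (Continuous.aestronglyMeasurable (by fun_prop))]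
  have h1 : ∀ p : ℝ × ℝ, Real.sin (t * (x - (p.1 + p.2))) =
      Real.sin (t * (x - p.1)) * Real.cos (t * p.2) -
      Real.cos (t * (x - p.1)) * Real.sin (t * p.2) := by
    intro p
    rw [← Real.sin_sub]; congr 1; ring
  simp_rw [h1]
  rw [integral_sub
    ((integrable_sin_comp (φ := fun w => t * (x - w)) (by fun_prop)).mul_prod
      (integrable_cos_comp (φ := fun d => t * d) (by fun_prop)))
    ((integrable_cos_comp (φ := fun w => t * (x - w)) (by fun_prop)).mul_prod
      (integrable_sin_comp (φ := fun d => t * d) (by fun_prop))),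
    integral_prod_mul (fun w => Real.sin (t * (x - w))) (fun d => Real.cos (t * d)),
    integral_prod_mul (fun w => Real.cos (t * (x - w))) (fun d => Real.sin (t * d)),
    h.integral_sin, ← h.eq_integral_cos]
  ring

lemma integrable_abs_obsLaw {μW μδ : Measure ℝ} [IsProbabilityMeasure μW]
    [IsProbabilityMeasure μδ] (hW : Integrable (fun w => |w|) μW)
    (hδ : Integrable (fun d => |d|) μδ) (x : ℝ) :
    Integrable (fun y => |x - y|) (obsLaw μW μδ) := by
  rw [obsLaw, integrable_map_measure (Continuous.aestronglyMeasurable (by fun_prop))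
    (by fun_prop)]
  have h1 : Integrable (fun p : ℝ × ℝ => |x| + (|p.1| + |p.2|)) (μW.prod μδ) :=
    (integrable_const _).add ((hW.comp_fst μδ).add (hδ.comp_snd μW))
  refine h1.mono' (Continuous.aestronglyMeasurable (by fun_prop)) (ae_of_all _ fun p => ?_)
  simp only [Function.comp, Real.norm_eq_abs, abs_abs]
  exact (abs_sub _ _).trans (by gcongr; exact abs_add_le _ _)

/-! ### The polynomial kernel -/

lemma polyKFt_nonneg {r s : ℕ} (hr : Even r) (t : ℝ) : 0 ≤ polyKFt r s t := by
  unfold polyKFt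
  split_ifs with h
  · have : t ^ r ≤ 1 := by
      rw [← hr.pow_abs]; exact pow_le_one₀ (abs_nonneg _) h
    exact pow_nonneg (by linarith) _
  · rfl

lemma polyKFt_le_one {r s : ℕ} (hr : Even r) (t : ℝ) : polyKFt r s t ≤ 1 := by
  unfold polyKFt
  split_ifs with h
  · have : t ^ r ≤ 1 := by
      rw [← hr.pow_abs]; exact pow_le_one₀ (abs_nonneg _) h
    exact pow_le_one₀ (by linarith) (by linarith [hr.pow_nonneg t])
  · norm_num

lemma one_sub_polyKFt_le {r s : ℕ} (hr : Even r) {t : ℝ} (ht : |t| ≤ 1) :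
    1 - polyKFt r s t ≤ s * |t| ^ r := by
  have h1 : t ^ r ≤ 1 := by
    rw [← hr.pow_abs]; exact pow_le_one₀ (abs_nonneg _) ht
  have h2 := one_add_mul_le_pow (a := -t ^ r) (by linarith) s
  rw [polyKFt, if_pos ht, hr.pow_abs]
  rw [← sub_eq_add_neg] at h2
  linarith

lemma polyKFt_eq_zero {r s : ℕ} {t : ℝ} (ht : 1 < |t|) : polyKFt r s t = 0 := by
  rw [polyKFt, if_neg (not_le.2 ht)]

lemma measurable_polyKFt (r s : ℕ) : Measurable (polyKFt r s) :=
  Measurable.ite (measurableSet_le measurable_id.abs measurable_const) (by fun_prop)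
    measurable_const

lemma integrable_comp_abs_of_integrableOn {F : ℝ → ℝ} (hF : IntegrableOn F (Set.Ioi 0)) :
    Integrable fun t => F |t| := by
  rw [← integrableOn_univ, ← Set.Iic_union_Ioi (a := (0 : ℝ)), integrableOn_union]
  constructor
  · rw [integrableOn_Iic_iff_integrableOn_Iio]
    have h := hF
    rw [← neg_zero] at h
    refine (h.comp_neg_Iio).congr_fun (fun t ht => ?_) measurableSet_Iio
    simp only [Set.mem_Iio] at ht
    simp [abs_of_neg ht]
  · refine hF.congr_fun (fun t ht => ?_) measurableSet_Ioi
    simp only [Set.mem_Ioi] at ht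
    simp [abs_of_pos ht]

/-- The condition `β < r` makes the weighted kernel defect integrable at the origin. -/
lemma integrable_defect {β : ℝ} (hβ : 0 < β) {r s : ℕ} (hr : Even r) (hrβ : β < r) :
    Integrable fun t : ℝ => |t| ^ (-1 - β) * (1 - polyKFt r s t) := by
  have h1 : IntegrableOn (fun t : ℝ => t ^ (-1 - β) * (1 - polyKFt r s t)) (Set.Ioi 0) := by
    have hm : AEStronglyMeasurable (fun t : ℝ => t ^ (-1 - β) * (1 - polyKFt r s t)) :=
      ((Measurable.pow_const measurable_id _).mul
        ((measurable_polyKFt r s).const_sub 1)).aestronglyMeasurable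
    rw [← Set.Ioc_union_Ioi_eq_Ioi (zero_le_one' ℝ), integrableOn_union]
    constructor
    · have h2 : IntegrableOn (fun t : ℝ => (s : ℝ) * t ^ ((r : ℝ) - 1 - β)) (Set.Ioc 0 1) := by
        have := (intervalIntegral.intervalIntegrable_rpow' (a := 0) (b := 1)
          (r := (r : ℝ) - 1 - β) (by linarith)).1
        exact this.const_mul _
      refine h2.mono' hm.restrict ((ae_restrict_iff' measurableSet_Ioc).2
        (ae_of_all _ fun t ht => ?_))
      have h3 := one_sub_polyKFt_le (s := s) hr (t := t) (by rw [abs_of_pos ht.1]; exact ht.2)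
      have h4 := polyKFt_le_one (s := s) hr t
      rw [Real.norm_eq_abs, abs_of_nonneg (mul_nonneg (Real.rpow_nonneg ht.1.le _) (by linarith))]
      rw [abs_of_pos ht.1] at h3
      calc _ ≤ t ^ (-1 - β) * (s * t ^ r) := by
            gcongr; exact Real.rpow_nonneg ht.1.le _
        _ = s * (t ^ (-1 - β) * t ^ (r : ℝ)) := by rw [Real.rpow_natCast]; ring
        _ = _ := by rw [← Real.rpow_add ht.1]; congr 2; ring
    · refine (integrableOn_Ioi_rpow_of_lt (a := -1 - β) (by linarith) one_pos).congr_fun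
        (fun t ht => ?_) measurableSet_Ioi
      have ht : 1 < t := ht
      simp [polyKFt_eq_zero (r := r) (s := s) (show 1 < |t| by rwa [abs_of_pos (by linarith)])]
  have h2 := integrable_comp_abs_of_integrableOn h1
  refine h2.congr (ae_of_all _ fun t => ?_)
  simp [polyKFt, hr.pow_abs]

/-! ### Gil-Pelaez inversion -/

/-- A law whose characteristic function decays polynomially has no atoms: the mass at `x` is
bounded by the Laplace-weighted means of the rescaled characteristic function. -/
lemma measureReal_singleton_eq_zero {μ : Measure ℝ} [IsProbabilityMeasure μ] {β C : ℝ}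
    (hβ : 0 < β) (hφ : ∀ t, ‖charFn μ t‖ ≤ C * (1 + |t|) ^ (-β)) (x : ℝ) : μ.real {x} = 0 := by
  have hC : 0 ≤ C := by
    have := (norm_nonneg _).trans (hφ 0)
    simpa using this
  -- The Cauchy kernel of width `1 / (k + 1)` centred at `x`, normalised to be `2` at `x`, dominates
  -- `2 · 1_{x}`.
  have hbound : ∀ k : ℕ, μ.real {x} ≤
      ∫ t : ℝ, C * (1 + |t * ((k : ℝ) + 1)|) ^ (-β) * Real.exp (-(1 * |t|)) := by
    intro k
    set N : ℝ := (k : ℝ) + 1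
    have hcos : ∀ w : ℝ, ∫ t : ℝ, Real.cos ((t * N) * (x - w)) * Real.exp (-(1 * |t|)) =
        2 * 1 / (1 ^ 2 + (N * (x - w)) ^ 2) := by
      intro w
      rw [← integral_cos_mul_exp one_pos]
      simp_rw [mul_assoc]
    have h1 := integral_mul_kernel_swap (ν := μ)
      (b := fun t w => Real.cos ((t * N) * (x - w))) (c := fun _ => 1)
      (Continuous.measurable (by fun_prop)) (fun t y => Real.abs_cos_le_one _)
      (integrable_const _) (integrable_exp_neg_mul_abs one_pos)
    simp_rw [hcos] at h1
    have hi : Integrable (fun w => 2 * 1 / (1 ^ 2 + (N * (x - w)) ^ 2)) μ := by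
      refine .of_bound (Measurable.aestronglyMeasurable (by fun_prop)) 2 (ae_of_all _ fun w => ?_)
      rw [Real.norm_eq_abs, abs_of_nonneg (by positivity)]
      rw [div_le_iff₀ (by positivity)]
      nlinarith [sq_nonneg (N * (x - w))]
    have h2 : 2 * μ.real {x} ≤ ∫ w, 2 * 1 / (1 ^ 2 + (N * (x - w)) ^ 2) ∂μ := by
      have h3 : ∫ w, ({x} : Set ℝ).indicator (fun _ => (2 : ℝ)) w ∂μ = 2 * μ.real {x} := by
        rw [integral_indicator_const _ (measurableSet_singleton x), smul_eq_mul, mul_comm]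
      rw [← h3]
      refine integral_mono ((integrable_const _).indicator (measurableSet_singleton x)) hi
        fun w => ?_
      by_cases hw : w = x
      · simp [hw]
      · rw [Set.indicator_of_notMem (by simpa using hw)]
        positivity
    rw [← h1] at h2
    have h4 : ∫ t, (∫ w, Real.cos ((t * N) * (x - w)) ∂μ) * Real.exp (-(1 * |t|)) ≤
        ∫ t, 2 * (C * (1 + |t * N|) ^ (-β) * Real.exp (-(1 * |t|))) := by
      refine (le_abs_self _).trans ?_
      rw [← Real.norm_eq_abs]
      refine norm_integral_le_of_norm_le ?_ (ae_of_all _ fun t => ?_)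
      · refine Integrable.const_mul ?_ _
        refine (integrable_exp_neg_mul_abs one_pos).bdd_mul (c := C)
          (Measurable.aestronglyMeasurable (by fun_prop)) (ae_of_all _ fun t => ?_)
        rw [Real.norm_eq_abs, abs_of_nonneg (by positivity)]
        exact mul_le_of_le_one_right hC
          (Real.rpow_le_one_of_one_le_of_nonpos (by linarith [abs_nonneg (t * N)]) (by linarith))
      · rw [norm_mul, Real.norm_eq_abs, Real.norm_eq_abs, Real.abs_exp, ← mul_assoc]
        gcongr
        exact (abs_integral_cos_shift_le μ _ _).trans (by gcongr; exact hφ _)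
    rw [integral_const_mul] at h4
    linarith
  have hlim : Tendsto (fun k : ℕ => ∫ t : ℝ, C * (1 + |t * ((k : ℝ) + 1)|) ^ (-β) *
      Real.exp (-(1 * |t|))) atTop (𝓝 (∫ _ : ℝ, (0 : ℝ))) := by
    refine tendsto_integral_of_dominated_convergence (fun t => C * Real.exp (-(1 * |t|)))
      (fun k => Measurable.aestronglyMeasurable (by fun_prop))
      ((integrable_exp_neg_mul_abs one_pos).const_mul _) (fun k => ae_of_all _ fun t => ?_) ?_
    · rw [Real.norm_eq_abs, abs_of_nonneg (by positivity)]
      gcongr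
      exact mul_le_of_le_one_right hC
          (Real.rpow_le_one_of_one_le_of_nonpos (by linarith [abs_nonneg (t * ((k : ℝ) + 1))])
            (by linarith))
    · have h0 : ∀ᵐ t : ℝ, t ≠ 0 := by simp [ae_iff]
      filter_upwards [h0] with t ht
      have h1 : Tendsto (fun k : ℕ => 1 + |t * ((k : ℝ) + 1)|) atTop atTop := by
        refine tendsto_atTop_add_const_left _ _ ?_
        simp_rw [abs_mul]
        refine Tendsto.const_mul_atTop (abs_pos.2 ht) ?_
        exact tendsto_abs_atTop_atTop.comp
          (tendsto_atTop_add_const_right _ _ tendsto_natCast_atTop_atTop)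
      have h2 := ((tendsto_rpow_neg_atTop hβ).comp h1).const_mul C |>.mul_const
        (Real.exp (-(1 * |t|)))
      simpa using h2
  rw [integral_zero] at hlim
  exact le_antisymm (ge_of_tendsto' hlim hbound) measureReal_nonneg

/-- Gil-Pelaez kernel of the law `μ` at the point `x`: `E sin (t (x - W)) / t`. -/
def gilPelaez (μ : Measure ℝ) (x t : ℝ) : ℝ := ∫ w, Real.sin (t * (x - w)) / t ∂μ

lemma measurable_sin_div_shift (x : ℝ) :
    Measurable (Function.uncurry fun t w : ℝ => Real.sin (t * (x - w)) / t) :=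
  Measurable.div (Continuous.measurable (by fun_prop)) measurable_fst

lemma measurable_gilPelaez (μ : Measure ℝ) [IsProbabilityMeasure μ] (x : ℝ) :
    Measurable (gilPelaez μ x) :=
  ((measurable_sin_div_shift x).stronglyMeasurable.integral_prod_right (ν := μ)).measurable

lemma integrable_abs_sub {μ : Measure ℝ} [IsProbabilityMeasure μ]
    (hm : Integrable (fun w => |w|) μ) (x : ℝ) : Integrable (fun w => |x - w|) μ :=
  ((integrable_const |x|).add hm).mono' (Continuous.aestronglyMeasurable (by fun_prop))
    (ae_of_all _ fun w => by
      simp only [Pi.add_apply, Real.norm_eq_abs, abs_abs]; exact abs_sub _ _)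

lemma abs_gilPelaez_le {μ : Measure ℝ} [IsProbabilityMeasure μ]
    (hm : Integrable (fun w => |w|) μ) (x t : ℝ) :
    |gilPelaez μ x t| ≤ ∫ w, |x - w| ∂μ := by
  rw [← Real.norm_eq_abs, gilPelaez]
  exact norm_integral_le_of_norm_le (integrable_abs_sub hm x)
    (ae_of_all _ fun w => abs_sin_div_le t (x - w))

lemma abs_gilPelaez_le' {μ : Measure ℝ} [IsProbabilityMeasure μ] {β C : ℝ}
    (hφ : ∀ t, ‖charFn μ t‖ ≤ C * (1 + |t|) ^ (-β)) (x t : ℝ) :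
    |gilPelaez μ x t| ≤ 2 * C * (1 + |t|) ^ (-β) * |t|⁻¹ := by
  rw [gilPelaez, integral_div, abs_div, div_eq_mul_inv]
  gcongr
  refine (abs_integral_sin_shift_le μ t x).trans ?_
  rw [mul_assoc]
  gcongr
  exact hφ t

lemma integrable_gilPelaez {μ : Measure ℝ} [IsProbabilityMeasure μ] {β C : ℝ}
    (hβ : 0 < β) (hφ : ∀ t, ‖charFn μ t‖ ≤ C * (1 + |t|) ^ (-β))
    (hm : Integrable (fun w => |w|) μ) (x : ℝ) : Integrable (gilPelaez μ x) := by
  have hC : 0 ≤ C := by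
    have := (norm_nonneg _).trans (hφ 0)
    simpa using this
  have hI : Integrable fun t : ℝ => (1 + ‖t‖) ^ (-(1 + β)) :=
    integrable_one_add_norm (by simp [hβ])
  set M := ∫ w, |x - w| ∂μ
  have hM : 0 ≤ M := integral_nonneg fun w => abs_nonneg _
  refine (hI.const_mul (M * 2 ^ (1 + β) + 4 * C)).mono'
    (measurable_gilPelaez μ x).aestronglyMeasurable (ae_of_all _ fun t => ?_)
  rw [Real.norm_eq_abs, Real.norm_eq_abs]
  have hp : 0 < 1 + |t| := by positivity
  have hpos : 0 ≤ (1 + |t|) ^ (-(1 + β)) := by positivity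
  rw [add_mul]
  rcases le_total |t| 1 with h | h
  · have h1 : 1 ≤ 2 ^ (1 + β) * (1 + |t|) ^ (-(1 + β)) := by
      rw [Real.rpow_neg hp.le, ← div_eq_mul_inv, one_le_div (by positivity)]
      gcongr; linarith
    have h2 := abs_gilPelaez_le hm x t
    have h3 : M * 1 ≤ M * (2 ^ (1 + β) * (1 + |t|) ^ (-(1 + β))) := by gcongr
    have h4 : 0 ≤ 4 * C * (1 + |t|) ^ (-(1 + β)) := by positivity
    linarith
  · have h1 := abs_gilPelaez_le' hφ x t
    have h2 : |t|⁻¹ ≤ 2 * (1 + |t|)⁻¹ := by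
      rw [← div_eq_mul_inv, inv_eq_one_div, div_le_div_iff₀ (by linarith) hp]; linarith
    have h3 : 2 * C * (1 + |t|) ^ (-β) * |t|⁻¹ ≤ 4 * C * (1 + |t|) ^ (-(1 + β)) := by
      calc _ ≤ 2 * C * (1 + |t|) ^ (-β) * (2 * (1 + |t|)⁻¹) := by gcongr
        _ = 4 * C * ((1 + |t|) ^ (-1 : ℝ) * (1 + |t|) ^ (-β)) := by
            rw [Real.rpow_neg_one]; ring
        _ = _ := by rw [← Real.rpow_add hp]; congr 2; ring
    have h4 : 0 ≤ M * 2 ^ (1 + β) * (1 + |t|) ^ (-(1 + β)) := by positivity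
    linarith

/-- The Abel-smoothed sign function tends to `π` times the sign of `z`. -/
lemma tendsto_two_arctan (z : ℝ) : Tendsto (fun k : ℕ => 2 * Real.arctan (z / (1 / ((k : ℝ) + 1))))
    atTop (𝓝 (if 0 < z then Real.pi else if z = 0 then 0 else -Real.pi)) := by
  have hk : Tendsto (fun k : ℕ => (k : ℝ) + 1) atTop atTop :=
    tendsto_atTop_add_const_right _ _ tendsto_natCast_atTop_atTop
  simp_rw [div_div_eq_mul_div, div_one]
  split_ifs with h1 h2
  · have := ((tendsto_nhds_of_tendsto_nhdsWithin Real.tendsto_arctan_atTop).comp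
      (hk.const_mul_atTop h1)).const_mul 2
    rwa [mul_div_cancel₀ _ (two_ne_zero)] at this
  · simp [h2]
  · have h3 : z < 0 := lt_of_le_of_ne (not_lt.1 h1) h2
    have := ((tendsto_nhds_of_tendsto_nhdsWithin Real.tendsto_arctan_atBot).comp
      (hk.const_mul_atTop_of_neg h3)).const_mul 2
    rwa [show 2 * -(Real.pi / 2) = -Real.pi by ring] at this

/-- Gil-Pelaez inversion formula for the distribution function, by Abel summation. -/
lemma cdfF_eq_gilPelaez {μ : Measure ℝ} [IsProbabilityMeasure μ] {β C : ℝ}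
    (hβ : 0 < β) (hφ : ∀ t, ‖charFn μ t‖ ≤ C * (1 + |t|) ^ (-β))
    (hm : Integrable (fun w => |w|) μ) (x : ℝ) :
    cdfF μ x = 1 / 2 + (2 * Real.pi)⁻¹ * ∫ t, gilPelaez μ x t := by
  have hA := integrable_gilPelaez hβ hφ hm x
  have hε : ∀ k : ℕ, (0 : ℝ) < 1 / ((k : ℝ) + 1) := fun k => by positivity
  have h1 : ∀ k : ℕ, ∫ t, gilPelaez μ x t * Real.exp (-((1 / ((k : ℝ) + 1)) * |t|)) =
      ∫ w, 2 * Real.arctan ((x - w) / (1 / ((k : ℝ) + 1))) ∂μ := by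
    intro k
    simp_rw [gilPelaez]
    rw [integral_mul_kernel_swap (measurable_sin_div_shift x)
      (fun t w => abs_sin_div_le t (x - w)) (integrable_abs_sub hm x)
      (integrable_exp_neg_mul_abs (hε k))]
    simp_rw [integral_sin_div_mul_exp (hε k)]
  have h2 : Tendsto (fun k : ℕ => ∫ t, gilPelaez μ x t *
      Real.exp (-((1 / ((k : ℝ) + 1)) * |t|))) atTop (𝓝 (∫ t, gilPelaez μ x t)) := by
    refine tendsto_integral_of_dominated_convergence (fun t => |gilPelaez μ x t|)
      (fun k => hA.aestronglyMeasurable.mul (Continuous.aestronglyMeasurable (by fun_prop)))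
      hA.norm (fun k => ae_of_all _ fun t => ?_) (ae_of_all _ fun t => ?_)
    · rw [norm_mul, Real.norm_eq_abs, Real.norm_eq_abs, Real.abs_exp]
      refine mul_le_of_le_one_right (abs_nonneg _) (Real.exp_le_one_iff.2 ?_)
      have := hε k
      rw [neg_nonpos]; positivity
    · have h0 : Tendsto (fun k : ℕ => -((1 / ((k : ℝ) + 1)) * |t|)) atTop (𝓝 (-(0 * |t|))) :=
        (tendsto_one_div_add_atTop_nhds_zero_nat.mul_const _).neg
      have := ((Real.continuous_exp.tendsto _).comp h0).const_mul (gilPelaez μ x t)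
      simpa using this
  have h3 : Tendsto (fun k : ℕ => ∫ w, 2 * Real.arctan ((x - w) / (1 / ((k : ℝ) + 1))) ∂μ) atTop
      (𝓝 (∫ w, (if 0 < x - w then Real.pi else if x - w = 0 then 0 else -Real.pi) ∂μ)) := by
    refine tendsto_integral_of_dominated_convergence (fun _ => Real.pi)
      (fun k => Continuous.aestronglyMeasurable (by fun_prop))
      (integrable_const _) (fun k => ae_of_all _ fun w => ?_)
      (ae_of_all _ fun w => tendsto_two_arctan (x - w))
    rw [Real.norm_eq_abs, abs_le]
    have := Real.arctan_lt_pi_div_two ((x - w) / (1 / ((k : ℝ) + 1)))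
    have := Real.neg_pi_div_two_lt_arctan ((x - w) / (1 / ((k : ℝ) + 1)))
    constructor <;> linarith
  simp_rw [h1] at h2
  have h4 := tendsto_nhds_unique h2 h3
  -- `π sign (x - w) = 2π 1_{w ≤ x} - π - π 1_{w = x}`, and the atom at `x` has mass zero.
  have h5 : ∀ w : ℝ, (if 0 < x - w then Real.pi else if x - w = 0 then 0 else -Real.pi) =
      2 * (Set.Iic x).indicator (fun _ => Real.pi) w - Real.pi -
        ({x} : Set ℝ).indicator (fun _ => Real.pi) w := by
    intro w
    rcases lt_trichotomy w x with h | h | h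
    · simp [h, h.le, h.ne]; ring
    · simp [h]; ring
    · simp [not_le.2 h, h.ne', not_lt.2 h.le, sub_eq_zero, h.ne]
  have hi1 : Integrable (fun w => 2 * (Set.Iic x).indicator (fun _ => Real.pi) w) μ :=
    ((integrable_const _).indicator measurableSet_Iic).const_mul _
  have hi2 : Integrable (({x} : Set ℝ).indicator (fun _ => Real.pi)) μ :=
    (integrable_const _).indicator (measurableSet_singleton x)
  have hi3 : Integrable
      (fun w => 2 * (Set.Iic x).indicator (fun _ => Real.pi) w - Real.pi) μ :=
    hi1.sub (integrable_const _)
  simp_rw [h5] at h4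
  rw [integral_sub hi3 hi2, integral_sub hi1 (integrable_const _),
    integral_const_mul, integral_indicator_const _ measurableSet_Iic,
    integral_indicator_const _ (measurableSet_singleton x),
    measureReal_singleton_eq_zero hβ hφ x] at h4
  simp at h4
  rw [h4, cdfF, ← measureReal_def]
  have := Real.pi_pos
  field_simp
  ring

/-! ### The variance of the deconvolution kernel -/

lemma integrable_of_bdd_of_support {G : ℝ → ℝ} (hG : Measurable G) {D R : ℝ} (hR : 0 ≤ R)
    (hb : ∀ t, |G t| ≤ D) (hz : ∀ t, R < |t| → G t = 0) :
    Integrable G ∧ Integrable (fun t => G t ^ 2) ∧ ∫ t, G t ^ 2 ≤ 2 * R * D ^ 2 := by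
  have hI : ∀ c : ℝ, Integrable ((Set.Icc (-R) R).indicator fun _ => c) := fun c =>
    (integrable_indicator_iff measurableSet_Icc).2 (integrableOn_const (by simp))
  have hdom1 : ∀ t, ‖G t‖ ≤ (Set.Icc (-R) R).indicator (fun _ => D) t := by
    intro t
    by_cases ht : t ∈ Set.Icc (-R) R
    · rw [Set.indicator_of_mem ht]; exact hb t
    · rw [Set.indicator_of_notMem ht, hz t (by rw [Set.mem_Icc, ← abs_le] at ht; exact not_le.1 ht)]
      simp
  have hdom2 : ∀ t, G t ^ 2 ≤ (Set.Icc (-R) R).indicator (fun _ => D ^ 2) t := by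
    intro t
    by_cases ht : t ∈ Set.Icc (-R) R
    · rw [Set.indicator_of_mem ht, ← sq_abs]
      have := hb t
      gcongr
    · rw [Set.indicator_of_notMem ht, hz t (by rw [Set.mem_Icc, ← abs_le] at ht; exact not_le.1 ht)]
      simp
  refine ⟨(hI D).mono' hG.aestronglyMeasurable (ae_of_all _ hdom1),
    (hI (D ^ 2)).mono' (hG.pow_const 2).aestronglyMeasurable (ae_of_all _ fun t => ?_), ?_⟩
  · rw [Real.norm_eq_abs, abs_of_nonneg (sq_nonneg _)]
    exact hdom2 t
  · refine (integral_mono_of_nonneg (ae_of_all _ fun t => sq_nonneg _) (hI (D ^ 2))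
      (ae_of_all _ hdom2)).trans_eq ?_
    rw [integral_indicator measurableSet_Icc, setIntegral_const]
    simp [Measure.real, Real.volume_Icc]
    rw [ENNReal.toReal_ofReal (by linarith)]
    left; ring

lemma inv_charFn_le {α C : ℝ} {f : ℝ → ℝ} (hf : ∀ t, 0 < f t)
    (hlow : ∀ t, (1 + |t|) ^ (-α) ≤ C * f t) (t : ℝ) : (f t)⁻¹ ≤ C * (1 + |t|) ^ α := by
  have hp : 0 < 1 + |t| := by positivity
  have h := hlow t
  rw [Real.rpow_neg hp.le, inv_le_iff_one_le_mul₀ (by positivity)] at h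
  rw [inv_le_iff_one_le_mul₀ (hf t)]
  linarith

/-- The Fourier weight `K^Ft(ht) / f(t)` of the deconvolution kernel. -/
def deconvWeight (r s : ℕ) (f : ℝ → ℝ) (h t : ℝ) : ℝ := polyKFt r s (h * t) / f t

lemma measurable_deconvWeight {f : ℝ → ℝ} (hf : Measurable f) (r s : ℕ) (h : ℝ) :
    Measurable (deconvWeight r s f h) :=
  ((measurable_polyKFt r s).comp (measurable_const_mul h)).div hf

lemma polyKFt_mul_eq_zero {r s : ℕ} {h t : ℝ} (hh : 0 < h) (ht : h⁻¹ < |t|) :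
    polyKFt r s (h * t) = 0 := by
  apply polyKFt_eq_zero
  rw [abs_mul, abs_of_pos hh]
  rwa [inv_lt_iff_one_lt_mul₀ hh, mul_comm] at ht

lemma abs_deconvWeight_le {α C : ℝ} {f : ℝ → ℝ} {r : ℕ} (hr : Even r) (s : ℕ)
    (hf : ∀ t, 0 < f t) (hlow : ∀ t, (1 + |t|) ^ (-α) ≤ C * f t) (h t : ℝ) :
    |deconvWeight r s f h t| ≤ C * (1 + |t|) ^ α := by
  rw [deconvWeight, abs_div, abs_of_pos (hf t), abs_of_nonneg (polyKFt_nonneg hr _)]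
  calc _ ≤ 1 / f t := by gcongr; exact (hf t).le; exact polyKFt_le_one hr _
    _ = (f t)⁻¹ := one_div _
    _ ≤ _ := inv_charFn_le hf hlow t

lemma integrable_deconvWeight {α C : ℝ} (hα : 0 ≤ α) (hC : 0 ≤ C) {f : ℝ → ℝ} (hfm : Measurable f)
    {r : ℕ} (hr : Even r) (s : ℕ)
    (hf : ∀ t, 0 < f t) (hlow : ∀ t, (1 + |t|) ^ (-α) ≤ C * f t) {h : ℝ} (hh : 0 < h) :
    Integrable (deconvWeight r s f h) := by
  have hz : ∀ t, h⁻¹ < |t| → deconvWeight r s f h t = 0 := fun t ht => by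
    rw [deconvWeight, polyKFt_mul_eq_zero hh ht, zero_div]
  refine (integrable_of_bdd_of_support (D := C * (1 + h⁻¹) ^ α) (R := h⁻¹)
    (measurable_deconvWeight hfm r s h) (by positivity) (fun t => ?_) hz).1
  rcases lt_or_ge h⁻¹ |t| with ht | ht
  · rw [hz t ht, abs_zero]; positivity
  · exact (abs_deconvWeight_le hr s hf hlow h t).trans (by gcongr)

/-- Frequencies `|t| ≤ 1` contribute boundedly to the deconvolution kernel: the first-moment
condition keeps `K^Ft(ht) / f(t)` within `O(|t|)` of `exp (-|t|)`. -/
lemma abs_lowFreq_le {α C : ℝ} (hα : 0 ≤ α) (hC : 0 ≤ C) {μ : Measure ℝ} {f : ℝ → ℝ}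
    (hμ : realCharFn μ f) (hm : absMomBdd μ 1 C) {r : ℕ} (hr : Even r) (hr2 : 2 ≤ r) (s : ℕ)
    (hf : ∀ t, 0 < f t) (hlow : ∀ t, (1 + |t|) ^ (-α) ≤ C * f t) {h : ℝ} (hh : 0 < h)
    (hh1 : h ≤ 1) (u : ℝ) :
    |∫ t in {t : ℝ | |t| ≤ 1⁻¹}, Real.sin (t * u) / t * deconvWeight r s f h t| ≤
      Real.pi + 2 * (s * (C * 2 ^ α) + C * (C * 2 ^ α) + 1) + 2 := by
  refine abs_setIntegral_sin_div_le one_pos (measurable_deconvWeight hμ.measurable r s h)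
    (fun t ht => ?_) u
  rw [inv_one] at ht
  rw [one_mul]
  set Q := C * 2 ^ α
  have ha := abs_nonneg t
  have hQ : (f t)⁻¹ ≤ Q := (inv_charFn_le hf hlow t).trans (by
    simp only [Q]; gcongr; linarith)
  have hfi : 0 < (f t)⁻¹ := inv_pos.2 (hf t)
  have hht : |h * t| ≤ |t| := by
    rw [abs_mul, abs_of_pos hh]; exact mul_le_of_le_one_left ha hh1
  have hK1 := one_sub_polyKFt_le (s := s) hr (t := h * t) (hht.trans ht)
  have hK2 := polyKFt_le_one (s := s) hr (h * t)
  have hK3 : 1 - polyKFt r s (h * t) ≤ s * |t| := by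
    refine hK1.trans ?_
    gcongr
    exact (pow_le_of_le_one (abs_nonneg _) (hht.trans ht) (by omega)).trans hht
  have hf1 := hμ.one_sub_le hC hm t
  have hf2 := hμ.le_one t
  have he1 : Real.exp (-|t|) ≤ 1 := Real.exp_le_one_iff.2 (by linarith)
  have he2 := Real.add_one_le_exp (-|t|)
  have hdec : deconvWeight r s f h t - Real.exp (-|t|) =
      -((1 - polyKFt r s (h * t)) * (f t)⁻¹) + (1 - f t) * (f t)⁻¹ + (1 - Real.exp (-|t|)) := by
    have := (hf t).ne'
    rw [deconvWeight]; field_simp; ring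
  have b1 : (1 - polyKFt r s (h * t)) * (f t)⁻¹ ≤ s * |t| * Q := by gcongr
  have b2 : (1 - f t) * (f t)⁻¹ ≤ C * |t| * Q := by gcongr
  have p1 : 0 ≤ (1 - polyKFt r s (h * t)) * (f t)⁻¹ := mul_nonneg (by linarith) hfi.le
  have p2 : 0 ≤ (1 - f t) * (f t)⁻¹ := mul_nonneg (by linarith) hfi.le
  rw [hdec, abs_le]
  have e : (s * Q + C * Q + 1) * |t| = s * |t| * Q + C * |t| * Q + |t| := by ring
  rw [e]
  constructor <;> linarith

/-- The part of `K^Ft(ht) / (t f(t))` carried by the frequencies `|t| > 1`. -/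
def highWeight (r s : ℕ) (f : ℝ → ℝ) (h : ℝ) : ℝ → ℝ :=
  {t : ℝ | |t| ≤ 1⁻¹}ᶜ.indicator fun t => deconvWeight r s f h t / t

lemma measurableSet_lowFreq : MeasurableSet {t : ℝ | |t| ≤ 1⁻¹} :=
  measurableSet_le measurable_id.abs measurable_const

lemma highWeight_bounds {α C : ℝ} (hα : 1 < α) (hC : 0 ≤ C) {f : ℝ → ℝ} (hfm : Measurable f)
    {r : ℕ} (hr : Even r) (s : ℕ)
    (hf : ∀ t, 0 < f t) (hlow : ∀ t, (1 + |t|) ^ (-α) ≤ C * f t) {h : ℝ} (hh : 0 < h) :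
    Integrable (highWeight r s f h) ∧ Integrable (fun t => highWeight r s f h t ^ 2) ∧
      ∫ t, highWeight r s f h t ^ 2 ≤ 2 * (C * 2 ^ α) ^ 2 * h ^ (-(2 * α - 1)) := by
  have hz : ∀ t, h⁻¹ < |t| → highWeight r s f h t = 0 := fun t ht => by
    simp [highWeight, deconvWeight, polyKFt_mul_eq_zero hh ht, Set.indicator]
  have hD : ∀ t, |highWeight r s f h t| ≤ C * 2 ^ α * h⁻¹ ^ (α - 1) := by
    intro t
    have hpos : 0 ≤ C * 2 ^ α * h⁻¹ ^ (α - 1) := by positivity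
    rcases lt_or_ge h⁻¹ |t| with ht | ht
    · rwa [hz t ht, abs_zero]
    by_cases h1 : |t| ≤ 1⁻¹
    · rw [highWeight, Set.indicator_of_notMem (by simpa using h1), abs_zero]
      exact hpos
    · rw [highWeight, Set.indicator_of_mem (by simpa using h1)]
      rw [inv_one, not_le] at h1
      have ht0 : 0 < |t| := by linarith
      rw [abs_div, div_le_iff₀ ht0]
      calc _ ≤ C * (1 + |t|) ^ α := abs_deconvWeight_le hr s hf hlow h t
        _ ≤ C * (2 * |t|) ^ α := by gcongr; linarith
        _ = C * 2 ^ α * |t| ^ (α - 1) * |t| := by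
            rw [Real.mul_rpow (by norm_num) ht0.le, Real.rpow_sub_one ht0.ne']
            field_simp
        _ ≤ _ := by gcongr
  obtain ⟨a, b, c⟩ := integrable_of_bdd_of_support (R := h⁻¹)
    (((measurable_deconvWeight hfm r s h).div measurable_id).indicator
      measurableSet_lowFreq.compl) (by positivity) hD hz
  refine ⟨a, b, c.trans_eq ?_⟩
  rw [mul_pow, ← Real.rpow_natCast (h⁻¹ ^ (α - 1)) 2, ← Real.rpow_mul (by positivity),
    Real.inv_rpow hh.le, ← Real.rpow_neg hh.le, ← Real.rpow_neg_one]
  have : h ^ (-(2 * α - 1)) = h ^ (-1 : ℝ) * h ^ (-((α - 1) * (2 : ℕ))) := by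
    rw [← Real.rpow_add hh]; congr 1; push_cast; ring
  rw [this]; ring

lemma L1fun_eq_low_add_high {α C : ℝ} (hα : 0 ≤ α) (hC : 0 ≤ C) {f : ℝ → ℝ} (hfm : Measurable f)
    {r : ℕ} (hr : Even r) (s : ℕ)
    (hf : ∀ t, 0 < f t) (hlow : ∀ t, (1 + |t|) ^ (-α) ≤ C * f t) {h : ℝ} (hh : 0 < h) (u : ℝ) :
    L1fun f (polyKFt r s) h u = 1 / 2 + (2 * Real.pi)⁻¹ *
      ((∫ t in {t : ℝ | |t| ≤ 1⁻¹}, Real.sin (t * u) / t * deconvWeight r s f h t) +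
        ∫ t, Real.sin (t * u) * highWeight r s f h t) := by
  have hi := integrable_sin_div_mul (integrable_deconvWeight hα hC hfm hr s hf hlow hh) u
  have h2 : ∫ t, Real.sin (t * u) * highWeight r s f h t =
      ∫ t in {t : ℝ | |t| ≤ 1⁻¹}ᶜ, Real.sin (t * u) / t * deconvWeight r s f h t := by
    rw [← integral_indicator measurableSet_lowFreq.compl]
    congr 1; ext t
    by_cases ht : t ∈ {t : ℝ | |t| ≤ 1⁻¹}ᶜ
    · rw [highWeight, Set.indicator_of_mem ht, Set.indicator_of_mem ht]; ring
    · rw [highWeight, Set.indicator_of_notMem ht, Set.indicator_of_notMem ht, mul_zero]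
  rw [h2, integral_add_compl measurableSet_lowFreq hi]
  rfl

lemma measurable_L1fun {f : ℝ → ℝ} (hf : Measurable f) (r s : ℕ) (h x : ℝ) :
    Measurable fun y => L1fun f (polyKFt r s) h (x - y) := by
  have h1 : Measurable (Function.uncurry fun y t : ℝ =>
      Real.sin (t * (x - y)) / t * deconvWeight r s f h t) :=
    (Measurable.div (Continuous.measurable (by fun_prop)) measurable_snd).mul
      ((measurable_deconvWeight hf r s h).comp measurable_snd)
  exact ((h1.stronglyMeasurable.integral_prod_right (ν := volume)).measurable.const_mul _).const_add _

/-- The bound for the contribution of the frequencies `|t| ≤ 1`, including the constant `1/2`. -/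
def lowConst (α C : ℝ) (s : ℕ) : ℝ :=
  1 / 2 + (Real.pi + 2 * (s * (C * 2 ^ α) + C * (C * 2 ^ α) + 1) + 2)

/-- Second moment of the deconvolution kernel under the law of an observation. The low
frequencies are bounded; for the high ones the integrability of `f` gains a factor over the
trivial bound, giving `h ^ (-(2α-1))`. -/
lemma L1fun_second_moment {α C : ℝ} (hα : 1 < α) (hC : 0 ≤ C) {μW μδ : Measure ℝ} {f : ℝ → ℝ}
    [IsProbabilityMeasure μW] (hμ : memF3 α C μδ f) {r : ℕ} (hr : Even r) (hr2 : 2 ≤ r) (s : ℕ)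
    {h : ℝ} (hh : 0 < h) (hh1 : h ≤ 1) (x : ℝ) :
    MemLp (fun y => L1fun f (polyKFt r s) h (x - y)) 2 (obsLaw μW μδ) ∧
    ∫ y, (L1fun f (polyKFt r s) h (x - y)) ^ 2 ∂(obsLaw μW μδ) ≤
      (2 * lowConst α C s ^ 2 + 8 * Real.pi * C * (C * 2 ^ α) ^ 2) *
        (1 + h ^ (-(2 * α - 1))) := by
  obtain ⟨hc, hf, hlow, hd, hm⟩ := hμ
  have := hc.1
  have hprob := isProbabilityMeasure_obsLaw μW μδ
  have hfm := hc.measurable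
  obtain ⟨hG, hG2, hGle⟩ := highWeight_bounds hα hC hfm hr s hf hlow hh
  set G := highWeight r s f h
  set Hi : ℝ → ℝ := fun u => ∫ t, Real.sin (t * u) * G t with hHi
  have hpi : (2 * Real.pi)⁻¹ ≤ 1 := inv_le_one_of_one_le₀ (by linarith [Real.pi_gt_three])
  have hpi0 : 0 ≤ (2 * Real.pi)⁻¹ := by positivity
  have hab : ∀ u, |L1fun f (polyKFt r s) h u| ≤ lowConst α C s + |Hi u| := by
    intro u
    rw [L1fun_eq_low_add_high (by linarith) hC hfm hr s hf hlow hh u]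
    have h1 := abs_lowFreq_le (by linarith) hC hc hm hr hr2 s hf hlow hh hh1 u
    refine (abs_add_le _ _).trans ?_
    rw [lowConst, add_assoc, abs_of_pos (by norm_num : (0 : ℝ) < 1 / 2), abs_mul,
      abs_of_nonneg hpi0]
    gcongr
    exact (mul_le_of_le_one_left (abs_nonneg _) hpi).trans
      ((abs_add_le _ _).trans (by gcongr))
  have hHib : ∀ u, |Hi u| ≤ ∫ t, |G t| := by
    intro u
    rw [← Real.norm_eq_abs]
    refine norm_integral_le_of_norm_le hG.abs (ae_of_all _ fun t => ?_)
    rw [norm_mul]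
    exact mul_le_of_le_one_left (norm_nonneg _) (Real.abs_sin_le_one _)
  have hgm := measurable_L1fun hfm r s h x
  have hHm : Measurable fun y => Hi (x - y) := by
    have h1 : Measurable (Function.uncurry fun y t : ℝ => Real.sin (t * (x - y)) * G t) :=
      (Continuous.measurable (by fun_prop)).mul
        ((((measurable_deconvWeight hfm r s h).div measurable_id).indicator
          measurableSet_lowFreq.compl).comp measurable_snd)
    exact (h1.stronglyMeasurable.integral_prod_right (ν := volume)).measurable
  refine ⟨MemLp.of_bound hgm.aestronglyMeasurable (lowConst α C s + ∫ t, |G t|)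
    (ae_of_all _ fun y => (hab _).trans (by gcongr; exact hHib _)), ?_⟩
  have hHi2 : Integrable (fun y => Hi (x - y) ^ 2) (obsLaw μW μδ) :=
    Integrable.of_bound (hHm.pow_const 2).aestronglyMeasurable ((∫ t, |G t|) ^ 2)
      (ae_of_all _ fun y => by
        rw [Real.norm_eq_abs, abs_pow]; exact pow_le_pow_left₀ (abs_nonneg _) (hHib _) 2)
  have hschur : ∫ y, Hi (x - y) ^ 2 ∂(obsLaw μW μδ) ≤ (∫ t, G t ^ 2) * ∫ t, f t := by
    refine integral_sq_sineTransform_le (integrable_charFn hc hf hd) (fun τ => ?_) hG hG2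
    rw [integral_cos_obsLaw hc, abs_mul, abs_of_pos (hf τ)]
    refine mul_le_of_le_one_right (hf τ).le ?_
    rw [← Real.norm_eq_abs]
    refine (norm_integral_le_of_norm_le (integrable_const (1 : ℝ))
      (ae_of_all _ fun w => Real.abs_cos_le_one _)).trans ?_
    simp
  have hfI := integral_charFn_le hC hc hf hd
  have hfI0 : 0 ≤ ∫ t, f t := integral_nonneg fun t => (hf t).le
  have hp : 0 ≤ h ^ (-(2 * α - 1)) := by positivity
  calc ∫ y, (L1fun f (polyKFt r s) h (x - y)) ^ 2 ∂(obsLaw μW μδ)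
      ≤ ∫ y, (2 * lowConst α C s ^ 2 + 2 * Hi (x - y) ^ 2) ∂(obsLaw μW μδ) := by
        refine integral_mono_of_nonneg (ae_of_all _ fun y => sq_nonneg _)
          ((integrable_const _).add (hHi2.const_mul 2)) (ae_of_all _ fun y => ?_)
        change L1fun f (polyKFt r s) h (x - y) ^ 2 ≤ 2 * lowConst α C s ^ 2 + 2 * Hi (x - y) ^ 2
        have h1 : |L1fun f (polyKFt r s) h (x - y)| ^ 2 ≤ (lowConst α C s + |Hi (x - y)|) ^ 2 :=
          pow_le_pow_left₀ (abs_nonneg _) (hab _) 2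
        rw [sq_abs] at h1
        rw [← sq_abs (Hi (x - y))]
        nlinarith [sq_nonneg (lowConst α C s - |Hi (x - y)|)]
    _ = 2 * lowConst α C s ^ 2 + 2 * ∫ y, Hi (x - y) ^ 2 ∂(obsLaw μW μδ) := by
        rw [integral_add (integrable_const _) (hHi2.const_mul 2)]
        simp [integral_const_mul]
    _ ≤ 2 * lowConst α C s ^ 2 +
        2 * ((2 * (C * 2 ^ α) ^ 2 * h ^ (-(2 * α - 1))) * (2 * Real.pi * C)) := by
        gcongr
        exact hschur.trans (by gcongr)
    _ ≤ _ := by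
        have : 0 ≤ 2 * lowConst α C s ^ 2 * h ^ (-(2 * α - 1)) := by positivity
        have : 0 ≤ 8 * Real.pi * C * (C * 2 ^ α) ^ 2 := by positivity
        nlinarith

/-! ### The bias -/

/-- The noise cancels in the mean of the deconvolution kernel, leaving a smoothed form of the
Gil-Pelaez integral of the target law. -/
lemma integral_L1fun_obsLaw {α C C' : ℝ} (hα : 0 ≤ α) (hC : 0 ≤ C) {μW μδ : Measure ℝ}
    {f : ℝ → ℝ} [IsProbabilityMeasure μW] (hμ : memF3 α C μδ f) (hW : absMomBdd μW 1 C')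
    {r : ℕ} (hr : Even r) (s : ℕ) {h : ℝ} (hh : 0 < h) (x : ℝ)
    (hgi : Integrable (fun y => L1fun f (polyKFt r s) h (x - y)) (obsLaw μW μδ)) :
    ∫ y, L1fun f (polyKFt r s) h (x - y) ∂(obsLaw μW μδ) =
      1 / 2 + (2 * Real.pi)⁻¹ * ∫ t, gilPelaez μW x t * polyKFt r s (h * t) := by
  obtain ⟨hc, hf, hlow, hd, hm⟩ := hμ
  have := hc.1
  have hprob := isProbabilityMeasure_obsLaw μW μδ
  have hk := integrable_deconvWeight hα hC hc.measurable hr s hf hlow hh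
  have hswap := integral_mul_kernel_swap (ν := obsLaw μW μδ)
    (measurable_sin_div_shift x) (fun t y => abs_sin_div_le t (x - y))
    (integrable_abs_obsLaw (integrable_abs_of_absMomBdd hW) (integrable_abs_of_absMomBdd hm) x) hk
  have h1 : ∀ t, (∫ y, Real.sin (t * (x - y)) / t ∂(obsLaw μW μδ)) * deconvWeight r s f h t =
      gilPelaez μW x t * polyKFt r s (h * t) := by
    intro t
    have := (hf t).ne'
    rw [integral_div, integral_sin_obsLaw hc, gilPelaez, integral_div, deconvWeight]
    field_simp
  simp_rw [h1] at hswap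
  have hi : Integrable (fun y => (2 * Real.pi)⁻¹ *
      ∫ t, Real.sin (t * (x - y)) / t * (polyKFt r s (h * t) / f t)) (obsLaw μW μδ) := by
    refine (hgi.sub (integrable_const (1 / 2 : ℝ))).congr (ae_of_all _ fun y => ?_)
    simp only [Pi.sub_apply, L1fun]; ring
  unfold L1fun
  rw [integral_add (integrable_const _) hi, integral_const_mul, hswap]
  simp [deconvWeight]

lemma integrable_polyKFt_mul {r : ℕ} (hr : Even r) (s : ℕ) {h : ℝ} (hh : 0 < h) :
    Integrable fun t => polyKFt r s (h * t) :=
  (integrable_of_bdd_of_support (D := 1) (R := h⁻¹)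
    ((measurable_polyKFt r s).comp (measurable_const_mul h)) (by positivity)
    (fun t => by
      rw [Function.comp_apply, abs_of_nonneg (polyKFt_nonneg hr _)]; exact polyKFt_le_one hr _)
    (fun _ ht => polyKFt_mul_eq_zero hh ht)).1

/-- For `β > 0` the bias is the Gil-Pelaez integral weighted by `1 - K^Ft(ht)`, and scaling of
`∫ |t| ^ (-1-β) (1 - K^Ft(ht)) dt` gives the rate. -/
lemma bias_le_of_pos {β C : ℝ} (hβ : 0 < β) (hC : 0 ≤ C) {μ : Measure ℝ} (hμ : memG3 β C μ)
    {r s : ℕ} (hr : Even r) (hrβ : β < r) {h : ℝ} (hh : 0 < h) (x : ℝ) :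
    |1 / 2 + (2 * Real.pi)⁻¹ * (∫ t, gilPelaez μ x t * polyKFt r s (h * t)) - cdfF μ x| ≤
      2 * C * (∫ t : ℝ, |t| ^ (-1 - β) * (1 - polyKFt r s t)) * h ^ β := by
  obtain ⟨hp, hφ, hm⟩ := hμ
  have hmi := integrable_abs_of_absMomBdd hm
  have hg := integrable_gilPelaez hβ hφ hmi x
  have hK : Integrable fun t => gilPelaez μ x t * polyKFt r s (h * t) := by
    refine hg.mul_bdd (c := 1)
      ((measurable_polyKFt r s).comp (measurable_const_mul h)).aestronglyMeasurable
      (ae_of_all _ fun t => ?_)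
    rw [Real.norm_eq_abs, abs_of_nonneg (polyKFt_nonneg hr _)]
    exact polyKFt_le_one hr _
  have hdef := integrable_defect (s := s) hβ hr hrβ
  have hscale : ∀ t : ℝ, t ≠ 0 → |t| ^ (-1 - β) * (1 - polyKFt r s (h * t)) =
      h ^ (1 + β) * (|h * t| ^ (-1 - β) * (1 - polyKFt r s (h * t))) := by
    intro t _
    rw [abs_mul, abs_of_pos hh, Real.mul_rpow hh.le (abs_nonneg _), ← mul_assoc, ← mul_assoc,
      ← Real.rpow_add hh]
    simp
  have hdefh : Integrable fun t : ℝ =>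
      h ^ (1 + β) * (|h * t| ^ (-1 - β) * (1 - polyKFt r s (h * t))) :=
    (hdef.comp_mul_left' hh.ne').const_mul _
  rw [cdfF_eq_gilPelaez hβ hφ hmi x, add_sub_add_left_eq_sub, ← mul_sub, ← integral_sub hK hg,
    abs_mul, abs_of_pos (by positivity : (0 : ℝ) < (2 * Real.pi)⁻¹)]
  have hpi : (2 * Real.pi)⁻¹ ≤ 1 := inv_le_one_of_one_le₀ (by linarith [Real.pi_gt_three])
  refine (mul_le_of_le_one_left (abs_nonneg _) hpi).trans ?_
  calc |∫ t, (gilPelaez μ x t * polyKFt r s (h * t) - gilPelaez μ x t)|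
      ≤ ∫ t, 2 * C * (h ^ (1 + β) * (|h * t| ^ (-1 - β) * (1 - polyKFt r s (h * t)))) := by
        rw [← Real.norm_eq_abs]
        refine norm_integral_le_of_norm_le (hdefh.const_mul _) ?_
        filter_upwards [Measure.ae_ne volume (0 : ℝ)] with t ht
        have ht0 : 0 < |t| := abs_pos.2 ht
        have hK1 : 0 ≤ 1 - polyKFt r s (h * t) := by linarith [polyKFt_le_one (s := s) hr (h * t)]
        rw [← hscale t ht, Real.norm_eq_abs, ← mul_sub_one, abs_mul, abs_sub_comm, abs_of_nonneg hK1,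
          ← mul_assoc]
        gcongr
        refine (abs_gilPelaez_le' hφ x t).trans ?_
        rw [mul_assoc]
        gcongr
        have e : |t| ^ (-1 - β) = |t| ^ (-β) * |t|⁻¹ := by
          rw [← Real.rpow_neg_one, ← Real.rpow_add ht0]; congr 1; ring
        rw [e]
        gcongr ?_ * _
        exact Real.rpow_le_rpow_of_nonpos ht0 (by linarith) (by linarith)
    _ = 2 * C * (∫ t : ℝ, |t| ^ (-1 - β) * (1 - polyKFt r s t)) * h ^ β := by
        rw [integral_const_mul, integral_const_mul,
          Measure.integral_comp_mul_left (fun t => |t| ^ (-1 - β) * (1 - polyKFt r s t)) h,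
          abs_of_pos (inv_pos.2 hh), Real.rpow_add hh, Real.rpow_one, smul_eq_mul]
        field_simp

/-- For `β = 0` nothing is assumed on the decay of the target, and the bias is bounded because
the smoothed sine integral is. -/
lemma bias_le_zero {C : ℝ} {μ : Measure ℝ} [IsProbabilityMeasure μ] (hm : absMomBdd μ 1 C)
    {r s : ℕ} (hr : Even r) (hr2 : 2 ≤ r) {h : ℝ} (hh : 0 < h) (x : ℝ) :
    |1 / 2 + (2 * Real.pi)⁻¹ * (∫ t, gilPelaez μ x t * polyKFt r s (h * t)) - cdfF μ x| ≤
      2 + (Real.pi + 2 * (s + 1) + 2) := by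
  have hk := integrable_polyKFt_mul hr s hh
  have hswap := integral_mul_kernel_swap (ν := μ)
    (measurable_sin_div_shift x) (fun t y => abs_sin_div_le t (x - y))
    (integrable_abs_sub (integrable_abs_of_absMomBdd hm) x) hk
  have hin : ∀ u, |∫ t, Real.sin (t * u) / t * polyKFt r s (h * t)| ≤
      Real.pi + 2 * (s + 1) + 2 := by
    intro u
    have h1 := abs_setIntegral_sin_div_le (A := s + 1) hh
      ((measurable_polyKFt r s).comp (measurable_const_mul h)) (fun t ht => ?_) u
    · rwa [setIntegral_eq_integral_of_forall_compl_eq_zero] at h1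
      intro t ht
      simp [polyKFt_mul_eq_zero hh (not_le.1 ht)]
    · have ha := abs_nonneg t
      have hht : |h * t| = h * |t| := by rw [abs_mul, abs_of_pos hh]
      have hht1 : |h * t| ≤ 1 := by
        rw [hht]
        calc _ ≤ h * h⁻¹ := by gcongr
          _ = 1 := mul_inv_cancel₀ hh.ne'
      have hK1 := one_sub_polyKFt_le (s := s) hr hht1
      have hK2 := polyKFt_le_one (s := s) hr (h * t)
      have hK3 : 1 - polyKFt r s (h * t) ≤ s * (h * |t|) := by
        rw [← hht]
        refine hK1.trans ?_
        gcongr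
        exact pow_le_of_le_one (abs_nonneg _) hht1 (by omega)
      have hp : 0 ≤ h * |t| := by positivity
      have he1 : Real.exp (-(h * |t|)) ≤ 1 := Real.exp_le_one_iff.2 (by linarith)
      have he2 := Real.add_one_le_exp (-(h * |t|))
      have hp2 : 0 ≤ s * (h * |t|) := by positivity
      rw [Function.comp_apply, abs_le]
      constructor <;> nlinarith
  have hb : |∫ t, gilPelaez μ x t * polyKFt r s (h * t)| ≤ Real.pi + 2 * (s + 1) + 2 := by
    have e : ∫ t, gilPelaez μ x t * polyKFt r s (h * t) =
      ∫ w, (∫ t, Real.sin (t * (x - w)) / t * polyKFt r s (h * t)) ∂μ := hswap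
    rw [e, ← Real.norm_eq_abs]
    refine (norm_integral_le_of_norm_le (integrable_const (Real.pi + 2 * (s + 1) + 2 : ℝ))
      (ae_of_all _ fun w => hin (x - w))).trans ?_
    simp
  have hF0 : 0 ≤ cdfF μ x := ENNReal.toReal_nonneg
  have hF1 : cdfF μ x ≤ 1 := measureReal_le_one (μ := μ)
  have hpi : (2 * Real.pi)⁻¹ ≤ 1 := inv_le_one_of_one_le₀ (by linarith [Real.pi_gt_three])
  have h3 : |(2 * Real.pi)⁻¹ * ∫ t, gilPelaez μ x t * polyKFt r s (h * t)| ≤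
      Real.pi + 2 * (s + 1) + 2 := by
    rw [abs_mul, abs_of_pos (by positivity : (0 : ℝ) < (2 * Real.pi)⁻¹)]
    exact (mul_le_of_le_one_left (abs_nonneg _) hpi).trans hb
  rw [abs_le] at h3 ⊢
  constructor <;> linarith [h3.1, h3.2]

lemma exists_bias_le {β C : ℝ} (hβ : 0 ≤ β) (hC : 0 ≤ C) {r : ℕ} (s : ℕ) (hr : Even r)
    (hr2 : 2 ≤ r) (hrβ : β < r) :
    ∃ A : ℝ, ∀ (μ : Measure ℝ), memG3 β C μ → ∀ h : ℝ, 0 < h → ∀ x : ℝ,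
      |1 / 2 + (2 * Real.pi)⁻¹ * (∫ t, gilPelaez μ x t * polyKFt r s (h * t)) - cdfF μ x| ≤
        A * h ^ β := by
  rcases hβ.eq_or_lt with rfl | hβ
  · refine ⟨2 + (Real.pi + 2 * (s + 1) + 2), fun μ hμ h hh x => ?_⟩
    have := hμ.1
    rw [Real.rpow_zero, mul_one]
    exact bias_le_zero hμ.2.2 hr hr2 hh x
  · exact ⟨_, fun μ hμ h hh x => bias_le_of_pos hβ hC hμ hr hrβ hh x⟩

/-! ### The risk bound -/

/-- **Theorem 3.2, (3.7).** Uniform mean squared error bound for `F̂_W(⋅|h)`: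
for a constant `B` depending only on `C₁, C₂, r, s, α, β`,
`E(F̂_W(x|h) − F_W(x))² ≤ B (h^{2β} + n⁻¹(1 + h^{-(2α−1)} ℓ_h))`
uniformly over `F_δ ∈ ℱ₃(α,C₁)`, `F_W ∈ 𝒢₃(β,C₂)`, `x ∈ ℝ`, `0 ≤ h ≤ 1`, `n ≥ 1`. -/
theorem sup_MSE_dist_estimator_bandwidth_le
    (α β : ℝ) (hα : 0 < α) (hβ : 0 ≤ β)
    (r s : ℕ) (hr : 2 ≤ r) (hrEven : Even r) (hs : 1 ≤ s) (hrβ : β + 1 / 2 < r)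
    (C₁ C₂ : ℝ) (hC₁ : 0 < C₁) (hC₂ : 0 < C₂) :
    ∃ B > (0 : ℝ), ∀ h : ℝ, 0 ≤ h → h ≤ 1 → ∀ n : ℕ, 1 ≤ n →
      ∀ (μδ : Measure ℝ) (fδ : ℝ → ℝ), memF3 α C₁ μδ fδ →
      ∀ μW : Measure ℝ, memG3 β C₂ μW → ∀ x : ℝ,
        riskSq μW μδ n (fun X => FhatD fδ (polyKFt r s) h X x) (cdfF μW x) ≤
          ENNReal.ofReal B *
            (ENNReal.ofReal h ^ (2 * β) +
              (n : ℝ≥0∞)⁻¹ *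
                (1 + ENNReal.ofReal h ^ (-(2 * α - 1)) * ENNReal.ofReal (ellh α h))) := by
  obtain ⟨A, hA⟩ := exists_bias_le (C := C₂) hβ hC₂.le s hrEven hr (by linarith)
  set V := 2 * lowConst α C₁ s ^ 2 + 8 * Real.pi * C₁ * (C₁ * 2 ^ α) ^ 2 with hV
  have hV0 : 0 ≤ V := by positivity
  refine ⟨V + A ^ 2 + 1, by positivity, fun h hh0 hh1 n hn μδ fδ hδ μW hW x => ?_⟩
  have hα1 : 1 < α := one_lt_of_memF3 hα hδ
  have hell : ellh α h = 1 := if_neg (by linarith)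
  have hprobW := hW.1
  have hprobδ := hδ.1.1
  have hprob := isProbabilityMeasure_obsLaw μW μδ
  rcases hh0.eq_or_lt with rfl | hh
  · -- At `h = 0` the exponent `-(2α-1)` is negative, so the right-hand side is infinite.
    have htop : ENNReal.ofReal (0 : ℝ) ^ (-(2 * α - 1)) = ⊤ := by
      rw [ENNReal.ofReal_zero, ENNReal.zero_rpow_of_neg (by linarith)]
    have hB : ENNReal.ofReal (V + A ^ 2 + 1) ≠ 0 := by
      rw [ne_eq, ENNReal.ofReal_eq_zero, not_le]; positivity
    rw [hell, htop, ENNReal.ofReal_one, mul_one, add_top,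
      ENNReal.mul_top (ENNReal.inv_ne_zero.2 (ENNReal.natCast_ne_top n)), add_top,
      ENNReal.mul_top hB]
    exact le_top
  obtain ⟨hmem, hvar⟩ := L1fun_second_moment hα1 hC₁.le hδ hrEven hr s hh hh1 x (μW := μW)
  have hmean := integral_L1fun_obsLaw hα.le hC₁.le hδ hW.2.2 hrEven s hh x
    (hmem.integrable one_le_two)
  have hbias := hA μW hW h hh x
  rw [← hmean] at hbias
  have hrisk := lintegral_sq_mean_sub_le hmem hn (cdfF μW x)
  refine hrisk.trans ?_
  -- All terms are finite for `h > 0`, so the comparison takes place in `ℝ`.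
  have hn0 : (0 : ℝ) < n := by exact_mod_cast hn
  have hp : 0 ≤ h ^ (-(2 * α - 1)) := by positivity
  have hq0 : 0 ≤ h ^ (2 * β) := by positivity
  have hq : h ^ (2 * β) = (h ^ β) ^ 2 := by
    rw [← Real.rpow_natCast, ← Real.rpow_mul hh.le]; congr 1; push_cast; ring
  have hrhs : ENNReal.ofReal (V + A ^ 2 + 1) * (ENNReal.ofReal h ^ (2 * β) +
      (n : ℝ≥0∞)⁻¹ * (1 + ENNReal.ofReal h ^ (-(2 * α - 1)) * ENNReal.ofReal (ellh α h))) =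
      ENNReal.ofReal ((V + A ^ 2 + 1) *
        (h ^ (2 * β) + (n : ℝ)⁻¹ * (1 + h ^ (-(2 * α - 1))))) := by
    rw [hell, ENNReal.ofReal_one, mul_one, ENNReal.ofReal_rpow_of_pos hh,
      ENNReal.ofReal_rpow_of_pos hh, ENNReal.ofReal_mul (by positivity),
      ENNReal.ofReal_add hq0 (by positivity), ENNReal.ofReal_mul (by positivity),
      ENNReal.ofReal_add zero_le_one hp, ENNReal.ofReal_one, ENNReal.ofReal_inv_of_pos hn0,
      ENNReal.ofReal_natCast]
  rw [hrhs]
  apply ENNReal.ofReal_le_ofReal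
  have hb2 : (∫ y, L1fun fδ (polyKFt r s) h (x - y) ∂(obsLaw μW μδ) - cdfF μW x) ^ 2 ≤
      A ^ 2 * h ^ (2 * β) := by
    rw [hq, ← mul_pow, ← sq_abs]
    exact pow_le_pow_left₀ (abs_nonneg _) hbias 2
  calc _ ≤ (n : ℝ)⁻¹ * (V * (1 + h ^ (-(2 * α - 1)))) + A ^ 2 * h ^ (2 * β) := by gcongr
    _ = V * ((n : ℝ)⁻¹ * (1 + h ^ (-(2 * α - 1)))) + A ^ 2 * h ^ (2 * β) := by ring
    _ ≤ (V + A ^ 2 + 1) * ((n : ℝ)⁻¹ * (1 + h ^ (-(2 * α - 1)))) +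
        (V + A ^ 2 + 1) * h ^ (2 * β) := by
        have := sq_nonneg A
        gcongr <;> linarith
    _ = _ := by ring

end
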